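/- arXiv:2504.14048 — 2 statements merged into one kernel-verified Lean document; each statement's English description precedes it below -/
import Mathlib

section
/- Let Ω be a lattice in ℂ with Weierstrass function ℘, invariants g₂, g₃, and field of endomorphisms k. Let p ∈ ℂ ∖ Ω, and assume that g₂, g₃ and ℘(p) are algebraic over ℚ. Let α be an algebraic number with α ∉ k. Then αp ∉ Ω and ℘(αp) is transcendental over ℚ. -/
/-!
The proof is Schneider's method. Suppose that each of `p` and `αp` is a lattice point or a point at
which `℘` is algebraic. By the duplication formula (`double_mem`) the values of `℘` and `℘'` at all the
points `2ᵏp` and `2ᵏαp` then lie in a single number field `K`; if these points run into the lattice,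
they are first translated by a half period (`exists_shift`). Consequently the functions
`f₁(z) = d²℘(dz + a)` and `f₂(z) = (αd)²℘(αdz + b)`, with suitable `a`, `b` and a common denominator
`d`, take together with their derivatives algebraic integral values at as many points as desired, and
both satisfy a differential equation `f'' = 6f² - γ` with `γ` an algebraic integer. By the latter all
Taylor coefficients at these points lie in `K`, with controlled denominators and size (`exists_intPS`).

Both functions are quotients of entire functions of finite order, because `σ` and
`σ²℘ = σ'² - σσ''` are (`finOrder_wSigma`, `finOrder_sigmaNum`, `wP_eq`). This is the situation of the
Schneider-Lang theorem (`schneiderLang`). Siegel's lemma provides a polynomial in `f₁, f₂` vanishing to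
high order at `m` points (`exists_combPS`). If it is not identically zero, let `M` be its exact order of
vanishing. The leading Taylor coefficient at one of the points is small by Schwarz's lemma
(`norm_coeff_taylorPS_le`), but as a nonzero number of bounded denominator and size it cannot be too
small (`one_le_norm_mul_house_pow`); for `m` large with respect to `[K : ℚ]` this bounds `M`
(`order_le_of_estimates`), contradicting that `M` may be taken arbitrarily large.

Hence `℘(dz + a)` and `℘(αdz + b)` are algebraically dependent. Translating `z` by periods of the first
function, the second takes only finitely many values at generic points, so that it has two equal
translates, and some nonzero multiple of `αω` is a period for every period `ω`
(`exists_int_mul_mem`). This means that `α` lies in the field of endomorphisms.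
-/

open Complex

noncomputable section

/-- The lattice `ℤω₁ + ℤω₂`, as a set of complex numbers. -/
def LatticePts (ω₁ ω₂ : ℂ) : Set ℂ := {z | ∃ m n : ℤ, z = m * ω₁ + n * ω₂}

/-- `ω₁, ω₂` are the basis of a lattice: they are `ℝ`-linearly independent. -/
def IsLatticeBasis (ω₁ ω₂ : ℂ) : Prop := LinearIndependent ℝ ![ω₁, ω₂]

/-- The nonzero lattice points. -/
def LatticePts' (ω₁ ω₂ : ℂ) : Set ℂ := {w | w ∈ LatticePts ω₁ ω₂ ∧ w ≠ 0}

/-- The Weierstrass sigma function of the lattice `ℤω₁ + ℤω₂`: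
`σ(z) = z ∏_{ω ∈ Ω∖{0}} (1 − z/ω) exp(z/ω + z²/(2ω²))`. -/
def wSigma (ω₁ ω₂ : ℂ) (z : ℂ) : ℂ :=
  z * ∏' w : LatticePts' ω₁ ω₂,
    (1 - z / (w : ℂ)) * Complex.exp (z / w + z ^ 2 / (2 * (w : ℂ) ^ 2))

/-- The Weierstrass zeta function `ζ = σ'/σ`. -/
def wZeta (ω₁ ω₂ : ℂ) (z : ℂ) : ℂ := deriv (wSigma ω₁ ω₂) z / wSigma ω₁ ω₂ z

/-- The Weierstrass elliptic function `℘ = -ζ'`. -/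
def wP (ω₁ ω₂ : ℂ) (z : ℂ) : ℂ := - deriv (wZeta ω₁ ω₂) z

/-- The invariant `g₂ = 60 Σ_{ω ∈ Ω∖{0}} ω⁻⁴` of the lattice. -/
def g2 (ω₁ ω₂ : ℂ) : ℂ := 60 * ∑' w : LatticePts' ω₁ ω₂, ((w : ℂ) ^ 4)⁻¹

/-- The invariant `g₃ = 140 Σ_{ω ∈ Ω∖{0}} ω⁻⁶` of the lattice. -/
def g3 (ω₁ ω₂ : ℂ) : ℂ := 140 * ∑' w : LatticePts' ω₁ ω₂, ((w : ℂ) ^ 6)⁻¹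

/-- The quasi-period `η(ω) = ζ(z + ω) − ζ(z)` (independent of `z`; we evaluate at the
point `(ω₁+ω₂)/3`, which is never a pole of `ζ`, nor is its translate by a lattice point). -/
def wEta (ω₁ ω₂ : ℂ) (ω : ℂ) : ℂ :=
  wZeta ω₁ ω₂ ((ω₁ + ω₂) / 3 + ω) - wZeta ω₁ ω₂ ((ω₁ + ω₂) / 3)

/-- The field of endomorphisms `k = {α ∈ ℂ : αΩ ⊆ Ω} ⊗_ℤ ℚ`, as a set of complex numbers:
the `α ∈ ℂ` such that `mα` stabilizes the lattice for some nonzero integer `m`. -/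
def endQ (ω₁ ω₂ : ℂ) : Set ℂ :=
  {α | ∃ m : ℤ, m ≠ 0 ∧ ∀ w ∈ LatticePts ω₁ ω₂, (m : ℂ) * α * w ∈ LatticePts ω₁ ω₂}

/-- The transcendence degree over `ℚ` of the subfield `ℚ(S)` of `ℂ` generated by `S` is
at least `d`: there are `d` algebraically independent elements in `ℚ(S)`. -/
def trdegGe (S : Set ℂ) (d : ℕ) : Prop :=
  ∃ x : Fin d → ℂ, (∀ i, x i ∈ IntermediateField.adjoin ℚ S) ∧ AlgebraicIndependent ℚ x

/-! ### The Weierstrass sigma product -/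

section SigmaFunction

open Filter Topology PeriodPair

/-- The Weierstrass elementary factor `E₂(u) = (1 - u) exp (u + u² / 2)`. -/
def elemFactor (u : ℂ) : ℂ := (1 - u) * exp (u + u ^ 2 / 2)

lemma hasDerivAt_elemFactor (u : ℂ) :
    HasDerivAt elemFactor (-u ^ 2 * exp (u + u ^ 2 / 2)) u := by
  have h1 : HasDerivAt (fun u : ℂ ↦ u + u ^ 2 / 2) (1 + u) u := by
    have := (hasDerivAt_id u).add (((hasDerivAt_id u).pow 2).div_const 2)
    convert! this using 1
    simp
  have := ((hasDerivAt_id u).const_sub 1).mul h1.cexp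
  convert! this using 1
  simp only [id]
  ring

lemma differentiable_elemFactor : Differentiable ℂ elemFactor :=
  fun u ↦ (hasDerivAt_elemFactor u).differentiableAt

lemma norm_elemFactor_sub_one_le {u : ℂ} (hu : ‖u‖ ≤ 1) : ‖elemFactor u - 1‖ ≤ 5 * ‖u‖ ^ 3 := by
  have hd : ∀ x ∈ Metric.closedBall (0 : ℂ) ‖u‖, ‖deriv elemFactor x‖ ≤ 5 * ‖u‖ ^ 2 := by
    intro x hx
    have hx' : ‖x‖ ≤ ‖u‖ := by simpa using hx
    have hx1 : ‖x‖ ≤ 1 := hx'.trans hu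
    rw [(hasDerivAt_elemFactor x).deriv, norm_mul, norm_neg, norm_pow, Complex.norm_exp, mul_comm]
    have h2 : (x + x ^ 2 / 2).re ≤ 3 / 2 := by
      refine (Complex.re_le_norm _).trans ((norm_add_le _ _).trans ?_)
      simp only [norm_div, norm_pow, Complex.norm_ofNat]
      nlinarith [norm_nonneg x]
    have h3 : Real.exp (x + x ^ 2 / 2).re ≤ 5 := by
      refine (Real.exp_le_exp.mpr h2).trans ?_
      have h4 : Real.exp (3 / 2) ^ 2 = Real.exp 1 ^ 3 := by
        rw [← Real.exp_nat_mul, ← Real.exp_nat_mul]; norm_num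
      have h5 := Real.exp_one_lt_d9
      have h6 := Real.exp_pos 1
      have h7 := Real.exp_pos (3 / 2)
      have h8 : Real.exp 1 ^ 3 ≤ 25 := by
        calc Real.exp 1 ^ 3 ≤ 2.7182818286 ^ 3 := by gcongr
          _ ≤ 25 := by norm_num
      nlinarith
    gcongr
  have := (convex_closedBall (0 : ℂ) ‖u‖).norm_image_sub_le_of_norm_deriv_le
    (fun x _ ↦ differentiable_elemFactor x) hd (x := 0) (y := u) (by simp) (by simp)
  simpa [elemFactor, pow_succ, mul_assoc] using this

/-- A crude global bound for the elementary factor, good enough since any finite order of growth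
suffices for the sigma function. -/
lemma norm_elemFactor_le (u : ℂ) : ‖elemFactor u‖ ≤ Real.exp (5 * ‖u‖ ^ 3) := by
  rcases le_total ‖u‖ 1 with hu | hu
  · have h1 := norm_elemFactor_sub_one_le hu
    have h2 : ‖elemFactor u‖ ≤ 1 + 5 * ‖u‖ ^ 3 := by
      calc ‖elemFactor u‖ = ‖1 + (elemFactor u - 1)‖ := by ring_nf
        _ ≤ 1 + 5 * ‖u‖ ^ 3 := by
          refine (norm_add_le _ _).trans ?_
          simpa using h1
    exact h2.trans (by rw [add_comm]; exact Real.add_one_le_exp _)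
  · rw [elemFactor, norm_mul, Complex.norm_exp]
    have h1 : ‖1 - u‖ ≤ Real.exp ‖u‖ := by
      refine (norm_sub_le _ _).trans ?_
      rw [norm_one, add_comm]
      exact Real.add_one_le_exp _
    have h2 : (u + u ^ 2 / 2).re ≤ ‖u‖ + ‖u‖ ^ 2 := by
      refine (Complex.re_le_norm _).trans ((norm_add_le _ _).trans ?_)
      simp only [norm_div, norm_pow, Complex.norm_ofNat]
      nlinarith [sq_nonneg ‖u‖]
    calc _ ≤ Real.exp ‖u‖ * Real.exp (‖u‖ + ‖u‖ ^ 2) := by gcongr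
      _ = Real.exp (‖u‖ + (‖u‖ + ‖u‖ ^ 2)) := (Real.exp_add _ _).symm
      _ ≤ _ := by
        apply Real.exp_le_exp.mpr
        have h3 : ‖u‖ ≤ ‖u‖ ^ 3 := le_self_pow₀ hu (by norm_num)
        have h4 : ‖u‖ ^ 2 ≤ ‖u‖ ^ 3 := pow_le_pow_right₀ hu (by norm_num)
        nlinarith

variable (L : PeriodPair)

lemma mem_latticePts_iff {z : ℂ} : z ∈ LatticePts L.ω₁ L.ω₂ ↔ z ∈ L.lattice := by
  rw [PeriodPair.mem_lattice]
  simp only [LatticePts, Set.mem_ofPred_eq, eq_comm]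

/-- The inclusion of the index set of the sigma product into the lattice. -/
def latIncl (w : LatticePts' L.ω₁ L.ω₂) : L.lattice := ⟨w, (mem_latticePts_iff L).mp w.2.1⟩

lemma latIncl_injective : Function.Injective (latIncl L) := by
  intro a b h
  simpa [latIncl, Subtype.ext_iff] using h

lemma range_latIncl : Set.range (latIncl L) = {0}ᶜ := by
  ext l
  simp only [Set.mem_range, Set.mem_compl_iff, Set.mem_singleton_iff]
  constructor
  · rintro ⟨w, rfl⟩ h
    exact w.2.2 (congrArg Subtype.val h)
  · intro h
    exact ⟨⟨l, (mem_latticePts_iff L).mpr l.2, fun h' ↦ h (Subtype.ext h')⟩, rfl⟩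

lemma hasSum_latIncl {f : L.lattice → ℂ} {s : ℂ} (hf : HasSum f s) (h0 : f 0 = 0) :
    HasSum (fun w ↦ f (latIncl L w)) s := by
  refine ((latIncl_injective L).hasSum_iff ?_).mpr hf
  intro x hx
  rw [range_latIncl] at hx
  simp only [Set.mem_compl_iff, Set.mem_singleton_iff, not_not] at hx
  rw [hx, h0]

lemma tsum_latIncl {f : L.lattice → ℂ} (h0 : f 0 = 0) :
    ∑' w, f (latIncl L w) = ∑' l, f l := by
  refine (latIncl_injective L).tsum_eq ?_
  intro x hx
  rw [range_latIncl]
  intro h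
  exact hx (by rw [Set.mem_singleton_iff.mp h, h0])

lemma g2_eq : g2 L.ω₁ L.ω₂ = L.g₂ := by
  rw [g2, PeriodPair.g₂, PeriodPair.G, ← tsum_latIncl L (by simp)]
  rfl

lemma g3_eq : g3 L.ω₁ L.ω₂ = L.g₃ := by
  rw [g3, PeriodPair.g₃, PeriodPair.G, ← tsum_latIncl L (by simp)]
  rfl

lemma summable_latticePts' : Summable fun w : LatticePts' L.ω₁ L.ω₂ ↦ (‖(w : ℂ)‖ ^ 3)⁻¹ := by
  have h : Summable fun l : L.lattice ↦ ‖l‖ ^ (-3 : ℝ) :=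
    ZLattice.summable_norm_rpow _ _ (by simp; norm_num)
  refine (h.comp_injective (latIncl_injective L)).congr fun w ↦ ?_
  simp only [Function.comp, latIncl]
  rw [Real.rpow_neg (norm_nonneg _)]
  norm_cast

/-- The factor of the sigma product belonging to the lattice point `w`. -/
def sigmaFactor (w : LatticePts' L.ω₁ L.ω₂) (z : ℂ) : ℂ := elemFactor (z / w)

lemma differentiable_sigmaFactor (w : LatticePts' L.ω₁ L.ω₂) :
    Differentiable ℂ (sigmaFactor L w) :=
  differentiable_elemFactor.comp (differentiable_id.div_const _)

lemma sigmaFactor_ne_zero {w : LatticePts' L.ω₁ L.ω₂} {z : ℂ} (hz : z ≠ w) :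
    sigmaFactor L w z ≠ 0 := by
  refine mul_ne_zero ?_ (exp_ne_zero _)
  intro h
  exact hz ((div_eq_one_iff_eq w.2.2).mp (sub_eq_zero.mp h).symm)

/-- The sigma product without the leading factor `z`. -/
def sigmaProd (z : ℂ) : ℂ := ∏' w : LatticePts' L.ω₁ L.ω₂, sigmaFactor L w z

lemma wSigma_eq (z : ℂ) : wSigma L.ω₁ L.ω₂ z = z * sigmaProd L z := by
  rw [wSigma, sigmaProd]
  congr 1
  refine tprod_congr fun w ↦ ?_
  rw [sigmaFactor, elemFactor, div_pow, div_div, mul_comm (_ ^ 2) 2]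

lemma eventually_norm_sigmaFactor_sub_one_le (r : ℝ) :
    ∀ᶠ w in cofinite, ∀ z ∈ Metric.ball (0 : ℂ) r,
      ‖sigmaFactor L w z - 1‖ ≤ 5 * r ^ 3 * (‖(w : ℂ)‖ ^ 3)⁻¹ := by
  have h0 := (summable_latticePts' L).tendsto_cofinite_zero
  have h1 : ∀ᶠ w : LatticePts' L.ω₁ L.ω₂ in cofinite, (‖(w : ℂ)‖ ^ 3)⁻¹ < ((|r| + 1) ^ 3)⁻¹ :=
    h0.eventually (gt_mem_nhds (by positivity))
  filter_upwards [h1] with w hw z hz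
  have hz' : ‖z‖ < r := by simpa using hz
  have hr : 0 < r := (norm_nonneg _).trans_lt hz'
  have hwpos : 0 < ‖(w : ℂ)‖ := norm_pos_iff.mpr w.2.2
  have h2 : r < ‖(w : ℂ)‖ := by
    have := lt_of_pow_lt_pow_left₀ 3 hwpos.le ((inv_lt_inv₀ (by positivity) (by positivity)).mp hw)
    linarith [le_abs_self r]
  have h3 : ‖z / w‖ ≤ 1 := by
    rw [norm_div, div_le_one hwpos]; linarith
  refine (norm_elemFactor_sub_one_le h3).trans ?_
  rw [norm_div, div_pow, div_eq_mul_inv, ← mul_assoc]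
  gcongr

lemma hasProdLocallyUniformlyOn_sigmaProd (r : ℝ) :
    HasProdLocallyUniformlyOn (sigmaFactor L) (sigmaProd L) (Metric.ball 0 r) := by
  have := Summable.hasProdLocallyUniformlyOn_one_add (f := fun w z ↦ sigmaFactor L w z - 1)
    (Metric.isOpen_ball (x := (0 : ℂ)) (ε := r))
    ((summable_latticePts' L).mul_left (5 * r ^ 3)) (eventually_norm_sigmaFactor_sub_one_le L r)
    (fun w ↦ ((differentiable_sigmaFactor L w).sub_const 1).continuous.continuousOn)
  simpa [sigmaProd] using! this

lemma sigmaProd_tendsto (r : ℝ) :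
    TendstoLocallyUniformlyOn (fun (s : Finset _) z ↦ ∏ w ∈ s, sigmaFactor L w z) (sigmaProd L)
      atTop (Metric.ball 0 r) :=
  hasProdLocallyUniformlyOn_iff_tendstoLocallyUniformlyOn.mp
    (hasProdLocallyUniformlyOn_sigmaProd L r)

lemma differentiable_partialProd (s : Finset (LatticePts' L.ω₁ L.ω₂)) :
    Differentiable ℂ (fun z ↦ ∏ w ∈ s, sigmaFactor L w z) :=
  Differentiable.fun_finsetProd fun w _ ↦ differentiable_sigmaFactor L w

lemma differentiable_sigmaProd : Differentiable ℂ (sigmaProd L) := fun z ↦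
  ((sigmaProd_tendsto L (‖z‖ + 1)).differentiableOn
    (.of_forall fun s ↦ (differentiable_partialProd L s).differentiableOn)
    Metric.isOpen_ball).differentiableAt (Metric.isOpen_ball.mem_nhds (by simp))

lemma differentiable_wSigma : Differentiable ℂ (wSigma L.ω₁ L.ω₂) := by
  rw [show wSigma L.ω₁ L.ω₂ = fun z ↦ z * sigmaProd L z from funext (wSigma_eq L)]
  exact differentiable_id.mul (differentiable_sigmaProd L)

lemma sigmaProd_ne_zero {z : ℂ} (hz : z ∉ L.lattice) : sigmaProd L z ≠ 0 := by
  have h := tprod_one_add_ne_zero_of_summable (f := fun w ↦ sigmaFactor L w z - 1)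
    (fun w ↦ by
      have : sigmaFactor L w z ≠ 0 :=
        sigmaFactor_ne_zero L fun h ↦ hz (h ▸ (mem_latticePts_iff L).mp w.2.1)
      simpa using this) ?_
  · simpa [sigmaProd] using h
  · refine Summable.of_norm_bounded_eventually
      ((summable_latticePts' L).mul_left (5 * (‖z‖ + 1) ^ 3)) ?_
    filter_upwards [eventually_norm_sigmaFactor_sub_one_le L (‖z‖ + 1)] with w hw
    simpa using hw z (by simp)

lemma wSigma_ne_zero {z : ℂ} (hz : z ∉ L.lattice) : wSigma L.ω₁ L.ω₂ z ≠ 0 := by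
  rw [wSigma_eq]
  refine mul_ne_zero ?_ (sigmaProd_ne_zero L hz)
  rintro rfl
  exact hz (zero_mem _)

/-- The sigma function has finite order of growth. -/
lemma exists_norm_wSigma_le :
    ∃ C : ℝ, 0 ≤ C ∧ ∀ z, ‖wSigma L.ω₁ L.ω₂ z‖ ≤ Real.exp (C * (1 + ‖z‖) ^ 3) := by
  set S := ∑' w : LatticePts' L.ω₁ L.ω₂, (‖(w : ℂ)‖ ^ 3)⁻¹ with hS
  have hS0 : 0 ≤ S := tsum_nonneg fun w ↦ by positivity
  refine ⟨1 + 5 * S, by positivity, fun z ↦ ?_⟩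
  have hP : ‖sigmaProd L z‖ ≤ Real.exp (5 * S * ‖z‖ ^ 3) := by
    have ht := ((sigmaProd_tendsto L (‖z‖ + 1)).tendsto_at (a := z) (by simp)).norm
    refine le_of_tendsto ht (.of_forall fun s ↦ ?_)
    rw [norm_prod]
    calc ∏ w ∈ s, ‖sigmaFactor L w z‖ ≤ ∏ w ∈ s, Real.exp (5 * ‖z‖ ^ 3 * (‖(w : ℂ)‖ ^ 3)⁻¹) := by
          refine Finset.prod_le_prod (fun _ _ ↦ norm_nonneg _) fun w _ ↦ ?_
          refine (norm_elemFactor_le _).trans (le_of_eq ?_)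
          rw [norm_div, div_pow, div_eq_mul_inv, mul_assoc]
      _ = Real.exp (5 * ‖z‖ ^ 3 * ∑ w ∈ s, (‖(w : ℂ)‖ ^ 3)⁻¹) := by
          rw [← Real.exp_sum, Finset.mul_sum]
      _ ≤ Real.exp (5 * ‖z‖ ^ 3 * S) := by
          gcongr
          exact (summable_latticePts' L).sum_le_tsum s (fun w _ ↦ by positivity)
      _ = _ := by ring_nf
  rw [wSigma_eq, norm_mul]
  have h1 : ‖z‖ ≤ Real.exp ‖z‖ := by linarith [Real.add_one_le_exp ‖z‖]
  calc ‖z‖ * ‖sigmaProd L z‖ ≤ Real.exp ‖z‖ * Real.exp (5 * S * ‖z‖ ^ 3) := by gcongr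
    _ = Real.exp (‖z‖ + 5 * S * ‖z‖ ^ 3) := by rw [Real.exp_add]
    _ ≤ _ := by
      apply Real.exp_le_exp.mpr
      have hz := norm_nonneg z
      have h2 : ‖z‖ ≤ (1 + ‖z‖) ^ 3 := by nlinarith [pow_nonneg hz 3, pow_nonneg hz 2]
      have h3 : ‖z‖ ^ 3 ≤ (1 + ‖z‖) ^ 3 := by gcongr; linarith
      nlinarith [mul_le_mul_of_nonneg_left h3 hS0]

/-- An entire function of growth `exp (O((1 + |z|) ^ 3))`. -/
def FinOrder (f : ℂ → ℂ) : Prop :=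
  Differentiable ℂ f ∧ ∃ C : ℝ, 0 ≤ C ∧ ∀ z, ‖f z‖ ≤ Real.exp (C * (1 + ‖z‖) ^ 3)

lemma FinOrder.mul {f g : ℂ → ℂ} (hf : FinOrder f) (hg : FinOrder g) :
    FinOrder (fun z ↦ f z * g z) := by
  obtain ⟨hf, C, hC, hfC⟩ := hf
  obtain ⟨hg, D, hD, hgD⟩ := hg
  refine ⟨hf.mul hg, C + D, by positivity, fun z ↦ ?_⟩
  rw [norm_mul, add_mul, Real.exp_add]
  exact mul_le_mul (hfC z) (hgD z) (norm_nonneg _) (Real.exp_nonneg _)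

lemma FinOrder.sub {f g : ℂ → ℂ} (hf : FinOrder f) (hg : FinOrder g) :
    FinOrder (fun z ↦ f z - g z) := by
  obtain ⟨hf, C, hC, hfC⟩ := hf
  obtain ⟨hg, D, hD, hgD⟩ := hg
  refine ⟨hf.sub hg, C + D + 1, by positivity, fun z ↦ ?_⟩
  have hz : 1 ≤ (1 + ‖z‖) ^ 3 := one_le_pow₀ (by linarith [norm_nonneg z])
  have h1 : Real.exp (C * (1 + ‖z‖) ^ 3) ≤ Real.exp ((C + D) * (1 + ‖z‖) ^ 3) := by
    apply Real.exp_le_exp.mpr; nlinarith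
  have h2 : Real.exp (D * (1 + ‖z‖) ^ 3) ≤ Real.exp ((C + D) * (1 + ‖z‖) ^ 3) := by
    apply Real.exp_le_exp.mpr; nlinarith
  have h3 : 2 ≤ Real.exp ((1 + ‖z‖) ^ 3) := by
    linarith [Real.add_one_le_exp ((1 + ‖z‖) ^ 3)]
  calc _ ≤ ‖f z‖ + ‖g z‖ := norm_sub_le _ _
    _ ≤ 2 * Real.exp ((C + D) * (1 + ‖z‖) ^ 3) := by linarith [hfC z, hgD z]
    _ ≤ Real.exp ((1 + ‖z‖) ^ 3) * Real.exp ((C + D) * (1 + ‖z‖) ^ 3) := by gcongr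
    _ = _ := by rw [← Real.exp_add]; ring_nf

lemma FinOrder.deriv {f : ℂ → ℂ} (hf : FinOrder f) : FinOrder (deriv f) := by
  obtain ⟨hf, C, hC, hfC⟩ := hf
  refine ⟨fun z ↦ (hf.analyticAt z).deriv.differentiableAt, 8 * C, by positivity, fun z ↦ ?_⟩
  have := Complex.norm_deriv_le_of_forall_mem_sphere_norm_le (c := z) (R := 1) (f := f)
    (C := Real.exp (8 * C * (1 + ‖z‖) ^ 3)) one_pos hf.diffContOnCl (fun u hu ↦ ?_)
  · simpa using this
  · refine (hfC u).trans (Real.exp_le_exp.mpr ?_)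
    have h1 : ‖u‖ ≤ 1 + ‖z‖ := by
      have : ‖u - z‖ = 1 := by simpa [dist_eq_norm] using hu
      calc ‖u‖ = ‖(u - z) + z‖ := by ring_nf
        _ ≤ _ := (norm_add_le _ _).trans (by rw [this])
    calc C * (1 + ‖u‖) ^ 3 ≤ C * (2 * (1 + ‖z‖)) ^ 3 := by
          gcongr; linarith [norm_nonneg z]
      _ = _ := by ring

lemma FinOrder.comp_affine {f : ℂ → ℂ} (hf : FinOrder f) (a b : ℂ) :
    FinOrder (fun z ↦ f (a * z + b)) := by
  obtain ⟨hf, C, hC, hfC⟩ := hf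
  refine ⟨hf.comp ((differentiable_id.const_mul a).add_const b), C * (1 + ‖a‖ + ‖b‖) ^ 3,
    by positivity, fun z ↦ (hfC _).trans (Real.exp_le_exp.mpr ?_)⟩
  rw [mul_assoc, ← mul_pow]
  gcongr
  have h1 : ‖a * z + b‖ ≤ ‖a‖ * ‖z‖ + ‖b‖ := (norm_add_le _ _).trans (by rw [norm_mul])
  nlinarith [norm_nonneg a, norm_nonneg b, norm_nonneg z,
    mul_nonneg (norm_nonneg b) (norm_nonneg z)]

lemma FinOrder.const_mul {f : ℂ → ℂ} (hf : FinOrder f) (a : ℂ) :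
    FinOrder (fun z ↦ a * f z) := by
  refine FinOrder.mul ⟨differentiable_const a, ‖a‖, norm_nonneg a, fun z ↦ ?_⟩ hf
  have hz : 1 ≤ (1 + ‖z‖) ^ 3 := one_le_pow₀ (by linarith [norm_nonneg z])
  have h1 : ‖a‖ ≤ ‖a‖ * (1 + ‖z‖) ^ 3 := le_mul_of_one_le_right (norm_nonneg a) hz
  linarith [Real.add_one_le_exp (‖a‖ * (1 + ‖z‖) ^ 3)]

lemma finOrder_wSigma : FinOrder (wSigma L.ω₁ L.ω₂) :=
  ⟨differentiable_wSigma L, exists_norm_wSigma_le L⟩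

/-- The entire function `σ'² - σσ'' = σ²℘`. -/
def sigmaNum (z : ℂ) : ℂ :=
  deriv (wSigma L.ω₁ L.ω₂) z * deriv (wSigma L.ω₁ L.ω₂) z
    - wSigma L.ω₁ L.ω₂ z * deriv (deriv (wSigma L.ω₁ L.ω₂)) z

lemma finOrder_sigmaNum : FinOrder (sigmaNum L) :=
  ((finOrder_wSigma L).deriv.mul (finOrder_wSigma L).deriv).sub
    ((finOrder_wSigma L).mul (finOrder_wSigma L).deriv.deriv)

/-! ### Comparison of `-(log σ)''` with the series for `℘` -/

lemma eventually_notMem_lattice {z : ℂ} (hz : z ∉ L.lattice) : ∀ᶠ u in 𝓝 z, u ∉ L.lattice :=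
  L.isClosed_lattice.isOpen_compl.mem_nhds hz

lemma deriv_logDeriv_eq {f : ℂ → ℂ} (hf : Differentiable ℂ f) {z : ℂ} (h0 : f z ≠ 0) :
    deriv (logDeriv f) z = (deriv (deriv f) z * f z - deriv f z * deriv f z) / f z ^ 2 := by
  have : logDeriv f = fun z ↦ deriv f z / f z := rfl
  rw [this, deriv_fun_div (hf.analyticAt z).deriv.differentiableAt (hf z) h0]

lemma logDeriv_sigmaFactor {w : LatticePts' L.ω₁ L.ω₂} {z : ℂ} (hz : z ≠ w) :
    logDeriv (sigmaFactor L w) z = (z - w)⁻¹ + (w : ℂ)⁻¹ + z * ((w : ℂ) ^ 2)⁻¹ := by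
  have hw : (w : ℂ) ≠ 0 := w.2.2
  have hzw : z - w ≠ 0 := sub_ne_zero.mpr hz
  have hwz : (w : ℂ) - z ≠ 0 := sub_ne_zero.mpr hz.symm
  have h : HasDerivAt (sigmaFactor L w)
      (-(z / w) ^ 2 * exp (z / w + (z / w) ^ 2 / 2) * (1 / w)) z :=
    (hasDerivAt_elemFactor (z / w)).comp z ((hasDerivAt_id z).div_const _)
  rw [logDeriv_apply, h.deriv, sigmaFactor, elemFactor]
  have h1 : 1 - z / w ≠ 0 := by
    intro h'
    exact hz ((div_eq_one_iff_eq hw).mp (sub_eq_zero.mp h').symm)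
  have h1' : 1 - z / w = -(z - w) / w := by field_simp; ring
  have h2 := exp_ne_zero (z / w + (z / w) ^ 2 / 2)
  rw [h1']
  field_simp
  ring

lemma deriv_logDeriv_partialProd {z : ℂ} (hz : z ∉ L.lattice)
    (s : Finset (LatticePts' L.ω₁ L.ω₂)) :
    deriv (logDeriv fun z ↦ ∏ w ∈ s, sigmaFactor L w z) z =
      -∑ w ∈ s, (1 / (z - w) ^ 2 - 1 / (w : ℂ) ^ 2) := by
  have hne : ∀ u ∉ L.lattice, ∀ w : LatticePts' L.ω₁ L.ω₂, u ≠ w :=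
    fun u hu w h ↦ hu (h ▸ (mem_latticePts_iff L).mp w.2.1)
  have h1 : (logDeriv fun z ↦ ∏ w ∈ s, sigmaFactor L w z) =ᶠ[𝓝 z]
      fun u ↦ ∑ w ∈ s, ((u - w)⁻¹ + (w : ℂ)⁻¹ + u * ((w : ℂ) ^ 2)⁻¹) := by
    filter_upwards [eventually_notMem_lattice L hz] with u hu
    rw [logDeriv_prod (fun w _ ↦ sigmaFactor_ne_zero L (hne u hu w))
      (fun w _ ↦ differentiable_sigmaFactor L w u)]
    exact Finset.sum_congr rfl fun w _ ↦ logDeriv_sigmaFactor L (hne u hu w)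
  rw [h1.deriv_eq, ← Finset.sum_neg_distrib]
  refine HasDerivAt.deriv (HasDerivAt.fun_sum fun w _ ↦ ?_)
  have hzw : z - w ≠ 0 := sub_ne_zero.mpr (hne z hz w)
  have h2 := ((((hasDerivAt_id z).sub_const (w : ℂ)).inv hzw).add_const ((w : ℂ)⁻¹)).add
    ((hasDerivAt_id z).mul_const (((w : ℂ) ^ 2)⁻¹))
  convert! h2 using 1
  simp only [id]
  ring

lemma deriv_logDeriv_sigmaProd {z : ℂ} (hz : z ∉ L.lattice) :
    deriv (logDeriv (sigmaProd L)) z = 1 / z ^ 2 - ℘[L] z := by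
  set F : Finset (LatticePts' L.ω₁ L.ω₂) → ℂ → ℂ := fun s z ↦ ∏ w ∈ s, sigmaFactor L w z with hF
  have hdF : ∀ s, Differentiable ℂ (F s) := differentiable_partialProd L
  have hzb : z ∈ Metric.ball (0 : ℂ) (‖z‖ + 1) := by simp
  have h0 := sigmaProd_tendsto L (‖z‖ + 1)
  have h1 := h0.deriv (.of_forall fun s ↦ (hdF s).differentiableOn) Metric.isOpen_ball
  have h2 := h1.deriv (.of_forall fun s u _ ↦
    ((hdF s).analyticAt u).deriv.differentiableAt.differentiableWithinAt) Metric.isOpen_ball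
  have t0 := h0.tendsto_at hzb
  have t1 := h1.tendsto_at hzb
  have t2 := h2.tendsto_at hzb
  have hP := sigmaProd_ne_zero L hz
  have t3 := ((t2.mul t0).sub (t1.mul t1)).div (t0.pow 2) (pow_ne_zero 2 hP)
  rw [← deriv_logDeriv_eq (differentiable_sigmaProd L) hP] at t3
  have hs : HasSum (fun w : LatticePts' L.ω₁ L.ω₂ ↦ 1 / (z - w) ^ 2 - 1 / (w : ℂ) ^ 2)
      (℘[L - (0 : ℂ)] z) := by
    have := hasSum_latIncl L (L.hasSum_weierstrassPExcept 0 z) (by simp)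
    refine this.congr_fun fun w ↦ ?_
    rw [if_neg]
    · rfl
    · exact w.2.2
  have t4 : Tendsto (fun s ↦ deriv (logDeriv (F s)) z) atTop (𝓝 (-℘[L - (0 : ℂ)] z)) := by
    refine (Tendsto.neg hs).congr fun s ↦ ?_
    rw [deriv_logDeriv_partialProd L hz]
  have t5 : Tendsto (fun s ↦ deriv (logDeriv (F s)) z) atTop
      (𝓝 (deriv (logDeriv (sigmaProd L)) z)) := by
    refine t3.congr fun s ↦ ?_
    rw [deriv_logDeriv_eq (hdF s)]
    · rfl
    · exact Finset.prod_ne_zero_iff.mpr fun w _ ↦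
        sigmaFactor_ne_zero L fun h ↦ hz (h ▸ (mem_latticePts_iff L).mp w.2.1)
  rw [tendsto_nhds_unique t5 t4]
  have := L.weierstrassPExcept_add 0 z
  simp only [ZeroMemClass.coe_zero, sub_zero] at this
  rw [← this]
  simp

lemma wZeta_eq_logDeriv : wZeta L.ω₁ L.ω₂ = logDeriv (wSigma L.ω₁ L.ω₂) := rfl

lemma wP_eq {z : ℂ} (hz : z ∉ L.lattice) : wP L.ω₁ L.ω₂ z = ℘[L] z := by
  have hz0 : z ≠ 0 := fun h ↦ hz (h ▸ zero_mem _)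
  have h1 : wZeta L.ω₁ L.ω₂ =ᶠ[𝓝 z] fun u ↦ u⁻¹ + logDeriv (sigmaProd L) u := by
    filter_upwards [eventually_notMem_lattice L hz] with u hu
    have hu0 : u ≠ 0 := fun h ↦ hu (h ▸ zero_mem _)
    rw [wZeta_eq_logDeriv,
      show wSigma L.ω₁ L.ω₂ = fun z ↦ id z * sigmaProd L z from funext (wSigma_eq L),
      logDeriv_mul u hu0 (sigmaProd_ne_zero L hu) differentiableAt_id
        (differentiable_sigmaProd L u), logDeriv_id]
    simp
  have hd : DifferentiableAt ℂ (logDeriv (sigmaProd L)) z :=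
    ((differentiable_sigmaProd L).analyticAt z).deriv.differentiableAt.div
      (differentiable_sigmaProd L z) (sigmaProd_ne_zero L hz)
  rw [wP, h1.deriv_eq, deriv_fun_add (differentiableAt_inv hz0) hd, deriv_logDeriv_sigmaProd L hz]
  simp

lemma sigmaNum_eq {z : ℂ} (hz : z ∉ L.lattice) :
    sigmaNum L z = wSigma L.ω₁ L.ω₂ z ^ 2 * ℘[L] z := by
  have h := wSigma_ne_zero L hz
  rw [← wP_eq L hz, wP, wZeta_eq_logDeriv, deriv_logDeriv_eq (differentiable_wSigma L) h, sigmaNum]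
  field_simp
  ring

end SigmaFunction

/-! ### The addition and duplication formulas of `℘` -/

section AdditionFormula

open Filter Topology PeriodPair

variable (L : PeriodPair)

lemma countable_lattice : (L.lattice : Set ℂ).Countable := by
  have : Countable L.lattice := L.latticeEquivProd.toEquiv.countable_iff.mpr inferInstance
  exact Set.countable_coe_iff.mp this

lemma isPreconnected_compl_of_countable {s : Set ℂ} (hs : s.Countable) : IsPreconnected sᶜ := by
  refine (hs.isConnected_compl_of_one_lt_rank ?_).isPreconnected
  simp

lemma isPreconnected_compl_lattice : IsPreconnected (L.lattice : Set ℂ)ᶜ :=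
  isPreconnected_compl_of_countable (countable_lattice L)

lemma hasDerivAt_P {z : ℂ} (hz : z ∉ L.lattice) : HasDerivAt ℘[L] (℘'[L] z) z := by
  rw [← deriv_weierstrassP]
  exact (L.analyticOnNhd_weierstrassP z hz).differentiableAt.hasDerivAt

lemma eventually_punctured_notMem_lattice (z : ℂ) : ∀ᶠ u in 𝓝[≠] z, u ∉ L.lattice := by
  filter_upwards [nhdsWithin_le_nhds (L.compl_lattice_sdiff_singleton_mem_nhds z),
    self_mem_nhdsWithin] with u hu hne hmem
  exact hu ⟨hmem, hne⟩

/-- `℘` is not constant near any regular point. -/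
lemma not_eventually_const_P {z c : ℂ} (hz : z ∉ L.lattice) : ¬ ∀ᶠ u in 𝓝 z, ℘[L] u = c := by
  intro h
  have h1 : Set.EqOn ℘[L] (fun _ ↦ c) (L.lattice : Set ℂ)ᶜ :=
    L.analyticOnNhd_weierstrassP.eqOn_of_preconnected_of_eventuallyEq
      analyticOnNhd_const (isPreconnected_compl_lattice L) hz h
  have h2 : ℘[L] =ᶠ[𝓝[≠] 0] fun _ ↦ c := by
    filter_upwards [eventually_punctured_notMem_lattice L 0] with u hu using h1 hu
  have h3 := meromorphicOrderAt_congr h2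
  rw [L.order_weierstrassP 0 (zero_mem _)] at h3
  have h4 : 0 ≤ meromorphicOrderAt (fun _ : ℂ ↦ c) 0 := analyticAt_const.meromorphicOrderAt_nonneg
  rw [← h3] at h4
  exact absurd h4 (by decide)

/-- The second order differential equation of `℘`. -/
lemma hasDerivAt_P' {z : ℂ} (hz : z ∉ L.lattice) :
    HasDerivAt ℘'[L] (6 * ℘[L] z ^ 2 - L.g₂ / 2) z := by
  have hA := L.analyticOnNhd_weierstrassP
  have hB := L.analyticOnNhd_derivWeierstrassP
  have hmul : ∀ u ∈ (L.lattice : Set ℂ)ᶜ,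
      ℘'[L] u * (deriv ℘'[L] u - (6 * ℘[L] u ^ 2 - L.g₂ / 2)) = 0 := by
    intro u hu
    have hu' : u ∉ L.lattice := hu
    have h1 : HasDerivAt (fun x ↦ ℘'[L] x ^ 2) (2 * ℘'[L] u * deriv ℘'[L] u) u := by
      simpa using ((hB u hu).differentiableAt.hasDerivAt).fun_pow 2
    have h2 : HasDerivAt (fun x ↦ 4 * ℘[L] x ^ 3 - L.g₂ * ℘[L] x - L.g₃)
        (4 * (3 * ℘[L] u ^ 2 * ℘'[L] u) - L.g₂ * ℘'[L] u) u := by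
      simpa using ((((hasDerivAt_P L hu').fun_pow 3).const_mul 4).sub
        ((hasDerivAt_P L hu').const_mul L.g₂)).sub_const L.g₃
    have h3 : (fun x ↦ ℘'[L] x ^ 2) =ᶠ[𝓝 u]
        fun x ↦ 4 * ℘[L] x ^ 3 - L.g₂ * ℘[L] x - L.g₃ := by
      filter_upwards [eventually_notMem_lattice L hu'] with x hx using L.derivWeierstrassP_sq x hx
    have h4 := h1.unique (h2.congr_of_eventuallyEq h3)
    linear_combination h4 / 2
  have han : AnalyticOnNhd ℂ (fun u ↦ deriv ℘'[L] u - (6 * ℘[L] u ^ 2 - L.g₂ / 2))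
      (L.lattice : Set ℂ)ᶜ := fun u hu ↦
    ((hB u hu).deriv).sub ((analyticAt_const.mul ((hA u hu).pow 2)).sub analyticAt_const)
  rcases AnalyticOnNhd.eq_zero_or_eq_zero_of_mul_eq_zero hB han hmul
    (isPreconnected_compl_lattice L) with h | h
  · exfalso
    have hz' := eventually_notMem_lattice L hz
    obtain ⟨r, hr, hball⟩ := Metric.eventually_nhds_iff_ball.mp hz'
    refine not_eventually_const_P L (c := ℘[L] z) hz ?_
    filter_upwards [Metric.ball_mem_nhds z hr] with u hu
    refine Metric.isOpen_ball.is_const_of_deriv_eq_zero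
      (convex_ball z r).isPreconnected ?_ ?_ hu (Metric.mem_ball_self hr)
    · exact fun x hx ↦ (hasDerivAt_P L (hball x hx)).differentiableAt.differentiableWithinAt
    · intro x hx
      rw [(hasDerivAt_P L (hball x hx)).deriv]
      exact h x (hball x hx)
  · have := h z hz
    rw [← sub_eq_zero.mp this]
    exact (hB z hz).differentiableAt.hasDerivAt

/-- The addition theorem near `w = 0`, with the sum `s` of the arguments fixed. The quotient form of
`℘(w + v)`, `v = s - w`, has vanishing derivative by the differential equations, and its poles at
`w = 0` cancel, so that it extends to an analytic function `G`, constant equal to `G(0) = ℘(s)`. -/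
lemma eventually_addition {s : ℂ} (hs : s ∉ L.lattice) :
    ∀ᶠ w in 𝓝[≠] (0 : ℂ), 4 * (℘[L] w - ℘[L] (s - w)) ^ 2 *
      (℘[L] s + ℘[L] w + ℘[L] (s - w)) = (℘'[L] w - ℘'[L] (s - w)) ^ 2 := by
  let A := L.weierstrassPExcept 0
  let B := L.derivWeierstrassPExcept 0
  let P₂ : ℂ → ℂ := fun w ↦ ℘[L] (s - w)
  let Q₂ : ℂ → ℂ := fun w ↦ ℘'[L] (s - w)
  let δ : ℂ → ℂ := fun w ↦ A w - P₂ w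
  let β : ℂ → ℂ := fun w ↦ B w - Q₂ w
  let G : ℂ → ℂ := fun w ↦ (-(w * β w) + w ^ 4 * β w ^ 2 / 4 - 2 * δ w - w ^ 2 * δ w ^ 2) /
    (1 + w ^ 2 * δ w) ^ 2 - A w - P₂ w
  have hA : AnalyticAt ℂ A 0 := L.analyticAt_weierstrassPExcept 0
  have hB : AnalyticAt ℂ B 0 := L.analyticAt_derivWeierstrassPExcept 0
  have hsub : AnalyticAt ℂ (fun w : ℂ ↦ s - w) 0 := analyticAt_const.sub analyticAt_id
  have hs0 : s - 0 ∈ (L.lattice : Set ℂ)ᶜ := by simpa using hs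
  have hP₂ : AnalyticAt ℂ P₂ 0 := (L.analyticOnNhd_weierstrassP _ hs0).fun_comp hsub
  have hQ₂ : AnalyticAt ℂ Q₂ 0 := (L.analyticOnNhd_derivWeierstrassP _ hs0).fun_comp hsub
  have hδ : AnalyticAt ℂ δ 0 := hA.sub hP₂
  have hβ : AnalyticAt ℂ β 0 := hB.sub hQ₂
  have hden : AnalyticAt ℂ (fun w ↦ 1 + w ^ 2 * δ w) 0 := by fun_prop
  have hG : AnalyticAt ℂ G 0 := by
    refine ((AnalyticAt.div (by fun_prop) (hden.pow 2) ?_).sub hA).sub hP₂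
    simp
  have hG0 : G 0 = ℘[L] s := by
    simp [G, δ, A, P₂]
    ring
  -- On a punctured neighbourhood of `0` everything is regular.
  have hreg : ∀ᶠ w in 𝓝[≠] (0 : ℂ), w ≠ 0 ∧ w ∉ L.lattice ∧ s - w ∉ L.lattice ∧
      1 + w ^ 2 * δ w ≠ 0 := by
    have h1 : ∀ᶠ w in 𝓝 (0 : ℂ), s - w ∉ L.lattice := by
      have : Tendsto (fun w : ℂ ↦ s - w) (𝓝 0) (𝓝 s) := by
        simpa using hsub.continuousAt.tendsto
      exact this.eventually (eventually_notMem_lattice L hs)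
    have h2 : ∀ᶠ w in 𝓝 (0 : ℂ), 1 + w ^ 2 * δ w ≠ 0 :=
      hden.continuousAt.eventually_ne (by simp)
    filter_upwards [self_mem_nhdsWithin, eventually_punctured_notMem_lattice L 0,
      nhdsWithin_le_nhds h1, nhdsWithin_le_nhds h2] with w a b c d using ⟨a, b, c, d⟩
  -- the principal parts at `0`
  have hPA : ∀ w, ℘[L] w = A w + 1 / w ^ 2 := fun w ↦ by
    have := L.weierstrassPExcept_add 0 w
    simpa [A, B] using this.symm
  have hQB : ∀ w, ℘'[L] w = B w - 2 / w ^ 3 := fun w ↦ by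
    have := L.derivWeierstrassPExcept_sub 0 w
    simpa [A, B] using this.symm
  have hD : ∀ w, w ≠ 0 → ℘[L] w - P₂ w = (1 + w ^ 2 * δ w) / w ^ 2 := fun w hw ↦ by
    simp only [hPA w, δ]
    field_simp
    ring
  have hN : ∀ w, w ≠ 0 → ℘'[L] w - Q₂ w = (-2 + w ^ 3 * β w) / w ^ 3 := fun w hw ↦ by
    simp only [hQB w, β]
    field_simp
    ring
  have hGeq : ∀ᶠ w in 𝓝[≠] (0 : ℂ), G w =
      (℘'[L] w - Q₂ w) ^ 2 / (4 * (℘[L] w - P₂ w) ^ 2) - ℘[L] w - P₂ w := by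
    filter_upwards [hreg] with w ⟨h0, _, _, hne⟩
    rw [hD w h0, hN w h0, hPA w]
    simp only [G]
    field_simp
    ring
  have hderiv : ∀ᶠ w in 𝓝[≠] (0 : ℂ), deriv G w = 0 := by
    filter_upwards [hreg, eventually_eventually_nhdsWithin.mpr hGeq] with w ⟨h0, hw, hv, hne⟩ heq
    have heq' : G =ᶠ[𝓝 w] fun w ↦
        (℘'[L] w - Q₂ w) ^ 2 / (4 * (℘[L] w - P₂ w) ^ 2) - ℘[L] w - P₂ w := by
      rwa [(isOpen_compl_singleton (x := (0 : ℂ))).nhdsWithin_eq h0] at heq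
    have hsubw : HasDerivAt (fun w : ℂ ↦ s - w) (-1) w := by
      simpa using (hasDerivAt_id w).const_sub s
    have d1 := hasDerivAt_P L hw
    have d2 := hasDerivAt_P' L hw
    have d3 : HasDerivAt P₂ (-℘'[L] (s - w)) w := by
      simpa [Function.comp_def] using (hasDerivAt_P L hv).comp w hsubw
    have d4 : HasDerivAt Q₂ (-(6 * ℘[L] (s - w) ^ 2 - L.g₂ / 2)) w := by
      simpa [Function.comp_def] using (hasDerivAt_P' L hv).comp w hsubw
    have hDne : ℘[L] w - P₂ w ≠ 0 := by
      rw [hD w h0]; exact div_ne_zero hne (pow_ne_zero _ h0)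
    have d5 := ((((d2.sub d4).fun_pow 2).div (((d1.sub d3).fun_pow 2).const_mul 4)
      (by simpa using hDne)).sub d1).sub d3
    rw [heq'.deriv_eq]
    refine d5.deriv.trans ?_
    have e1 := L.derivWeierstrassP_sq w hw
    have e2 := L.derivWeierstrassP_sq (s - w) hv
    simp only [P₂, Q₂, Pi.sub_apply] at hDne ⊢
    clear_value A B
    generalize ℘[L] w = a at e1 e2 hDne ⊢
    generalize ℘[L] (s - w) = b at e1 e2 hDne ⊢
    generalize ℘'[L] w = a' at e1 e2 hDne ⊢
    generalize ℘'[L] (s - w) = b' at e1 e2 hDne ⊢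
    have hDne' : 4 * (a - b) ^ 2 ≠ 0 := by simpa using hDne
    field_simp
    linear_combination (-4 * (a - b) * (a' - b')) * (e1 - e2)
  have hGconst : ∀ᶠ w in 𝓝 (0 : ℂ), G w = ℘[L] s := by
    have h1 : ∀ᶠ w in 𝓝 (0 : ℂ), deriv G w = 0 :=
      hG.deriv.frequently_zero_iff_eventually_zero.mp hderiv.frequently
    have h2 := hG.eventually_analyticAt
    obtain ⟨r, hr, hball⟩ := Metric.eventually_nhds_iff_ball.mp (h1.and h2)
    filter_upwards [Metric.ball_mem_nhds 0 hr] with u hu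
    rw [← hG0]
    exact Metric.isOpen_ball.is_const_of_deriv_eq_zero (convex_ball 0 r).isPreconnected
      (fun x hx ↦ (hball x hx).2.differentiableAt.differentiableWithinAt)
      (fun x hx ↦ (hball x hx).1) hu (Metric.mem_ball_self hr)
  filter_upwards [hreg, hGeq, nhdsWithin_le_nhds hGconst] with w ⟨h0, _, _, hne⟩ h1 h2
  have hDne : ℘[L] w - P₂ w ≠ 0 := by
    rw [hD w h0]; exact div_ne_zero hne (pow_ne_zero _ h0)
  rw [h2] at h1
  rw [h1]
  simp only [P₂, Q₂] at hDne ⊢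
  field_simp
  ring

/-- The addition theorem of `℘`, with denominators cleared. -/
lemma addition {s w : ℂ} (hs : s ∉ L.lattice) (hw : w ∉ L.lattice) (hv : s - w ∉ L.lattice) :
    4 * (℘[L] w - ℘[L] (s - w)) ^ 2 * (℘[L] s + ℘[L] w + ℘[L] (s - w)) =
      (℘'[L] w - ℘'[L] (s - w)) ^ 2 := by
  let T : Set ℂ := (L.lattice : Set ℂ) ∪ (fun x ↦ s - x) '' L.lattice
  have hT : T.Countable := (countable_lattice L).union ((countable_lattice L).image _)
  have hmem : ∀ u, u ∈ Tᶜ ↔ u ∉ L.lattice ∧ s - u ∉ L.lattice := by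
    intro u
    simp only [T, Set.mem_compl_iff, Set.mem_union, not_or, SetLike.mem_coe, Set.mem_image]
    refine and_congr_right fun _ ↦ not_congr ⟨?_, fun h ↦ ⟨s - u, h, by ring⟩⟩
    rintro ⟨x, hx, rfl⟩
    simpa using hx
  have hsub : ∀ u, AnalyticAt ℂ (fun w : ℂ ↦ s - w) u :=
    fun u ↦ analyticAt_const.sub analyticAt_id
  have hP : AnalyticOnNhd ℂ ℘[L] Tᶜ := fun u hu ↦ L.analyticOnNhd_weierstrassP u ((hmem u).mp hu).1
  have hQ : AnalyticOnNhd ℂ ℘'[L] Tᶜ :=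
    fun u hu ↦ L.analyticOnNhd_derivWeierstrassP u ((hmem u).mp hu).1
  have hP₂ : AnalyticOnNhd ℂ (fun w ↦ ℘[L] (s - w)) Tᶜ := fun u hu ↦
    (L.analyticOnNhd_weierstrassP _ ((hmem u).mp hu).2).fun_comp (hsub u)
  have hQ₂ : AnalyticOnNhd ℂ (fun w ↦ ℘'[L] (s - w)) Tᶜ := fun u hu ↦
    (L.analyticOnNhd_derivWeierstrassP _ ((hmem u).mp hu).2).fun_comp (hsub u)
  have hreg : ∀ᶠ u in 𝓝[≠] (0 : ℂ), u ∈ Tᶜ := by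
    have h1 : ∀ᶠ w in 𝓝 (0 : ℂ), s - w ∉ L.lattice := by
      have : Tendsto (fun w : ℂ ↦ s - w) (𝓝 0) (𝓝 s) := by
        simpa using (hsub 0).continuousAt.tendsto
      exact this.eventually (eventually_notMem_lattice L hs)
    filter_upwards [eventually_punctured_notMem_lattice L 0, nhdsWithin_le_nhds h1] with u a b
    exact (hmem u).mpr ⟨a, b⟩
  have hev := eventually_addition L hs
  obtain ⟨u₀, hu₀, hu₁, hu₂⟩ := (hreg.and ((eventually_eventually_nhdsWithin.mpr hev).and
    self_mem_nhdsWithin)).exists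
  have hne : (u₀ : ℂ) ≠ 0 := hu₂
  rw [(isOpen_compl_singleton (x := (0:ℂ))).nhdsWithin_eq hne] at hu₁
  have := (((analyticOnNhd_const (v := (4 : ℂ))).mul ((hP.sub hP₂).pow 2)).mul
    (((analyticOnNhd_const (v := ℘[L] s)).add hP).add hP₂)).eqOn_of_preconnected_of_eventuallyEq
    ((hQ.sub hQ₂).pow 2) (isPreconnected_compl_of_countable hT) hu₀ hu₁
  exact this ((hmem w).mpr ⟨hw, hv⟩)

/-- The duplication formula, obtained from the addition theorem by letting the two arguments
tend to each other. -/
lemma duplication {z : ℂ} (hz : z ∉ L.lattice) (h2z : 2 * z ∉ L.lattice) :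
    4 * ℘'[L] z ^ 2 * (℘[L] (2 * z) + 2 * ℘[L] z) = (6 * ℘[L] z ^ 2 - L.g₂ / 2) ^ 2 := by
  have hz' : 2 * z - z ∉ L.lattice := by rwa [show 2 * z - z = z by ring]
  have hsubw : HasDerivAt (fun w : ℂ ↦ 2 * z - w) (-1) z := by
    simpa using (hasDerivAt_id z).const_sub (2 * z)
  have d1 := hasDerivAt_P L hz
  have d2 := hasDerivAt_P' L hz
  have d3 : HasDerivAt (fun w ↦ ℘[L] (2 * z - w)) (-℘'[L] (2 * z - z)) z := by
    simpa [Function.comp_def] using (hasDerivAt_P L hz').comp z hsubw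
  have d4 : HasDerivAt (fun w ↦ ℘'[L] (2 * z - w)) (-(6 * ℘[L] (2 * z - z) ^ 2 - L.g₂ / 2)) z := by
    simpa [Function.comp_def] using (hasDerivAt_P' L hz').comp z hsubw
  have t1 := hasDerivAt_iff_tendsto_slope.mp (d1.sub d3)
  have t2 := hasDerivAt_iff_tendsto_slope.mp (d2.sub d4)
  have t3 : Tendsto (fun w ↦ ℘[L] (2 * z) + ℘[L] w + ℘[L] (2 * z - w)) (𝓝[≠] z)
      (𝓝 (℘[L] (2 * z) + ℘[L] z + ℘[L] (2 * z - z))) :=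
    ((d1.continuousAt.const_add _).add d3.continuousAt).tendsto.mono_left nhdsWithin_le_nhds
  have hev : ∀ᶠ w in 𝓝[≠] z, 4 * slope (℘[L] - fun w ↦ ℘[L] (2 * z - w)) z w ^ 2 *
      (℘[L] (2 * z) + ℘[L] w + ℘[L] (2 * z - w)) =
      slope (℘'[L] - fun w ↦ ℘'[L] (2 * z - w)) z w ^ 2 := by
    have h1 := hsubw.continuousAt.eventually (eventually_notMem_lattice L hz')
    filter_upwards [self_mem_nhdsWithin, nhdsWithin_le_nhds h1,
      nhdsWithin_le_nhds (eventually_notMem_lattice L hz)] with w h0 hv hw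
    have := addition L h2z hw hv
    have h0' : w - z ≠ 0 := sub_ne_zero.mpr h0
    simp only [slope_def_field, Pi.sub_apply, show 2 * z - z = z by ring, sub_self, sub_zero]
    field_simp
    exact this
  have hlim := tendsto_nhds_unique_of_eventuallyEq ((t1.pow 2).const_mul 4 |>.mul t3)
    (t2.pow 2) hev
  rw [show 2 * z - z = z by ring] at hlim
  linear_combination hlim / 4

/-- The derivative of the duplication formula. -/
lemma duplication' {z : ℂ} (hz : z ∉ L.lattice) (h2z : 2 * z ∉ L.lattice) :
    8 * ℘'[L] z * (6 * ℘[L] z ^ 2 - L.g₂ / 2) * (℘[L] (2 * z) + 2 * ℘[L] z) +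
      8 * ℘'[L] z ^ 2 * (℘'[L] (2 * z) + ℘'[L] z) =
      24 * (6 * ℘[L] z ^ 2 - L.g₂ / 2) * ℘[L] z * ℘'[L] z := by
  have hmul : HasDerivAt (fun w : ℂ ↦ 2 * w) 2 z := by
    simpa using (hasDerivAt_id z).const_mul 2
  have d1 := hasDerivAt_P L hz
  have d2 := hasDerivAt_P' L hz
  have d3 : HasDerivAt (fun w ↦ ℘[L] (2 * w)) (℘'[L] (2 * z) * 2) z :=
    (hasDerivAt_P L h2z).comp z hmul
  have hev : (fun w ↦ 4 * ℘'[L] w ^ 2 * (℘[L] (2 * w) + 2 * ℘[L] w)) =ᶠ[𝓝 z]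
      fun w ↦ (6 * ℘[L] w ^ 2 - L.g₂ / 2) ^ 2 := by
    filter_upwards [eventually_notMem_lattice L hz,
      hmul.continuousAt.eventually (eventually_notMem_lattice L h2z)] with w h1 h2
    exact duplication L h1 h2
  have e1 := (((d2.fun_pow 2).const_mul 4).fun_mul (d3.fun_add (d1.const_mul 2)))
  have e2 := ((((d1.fun_pow 2).const_mul 6).sub_const (L.g₂ / 2)).fun_pow 2)
  have := e1.unique (e2.congr_of_eventuallyEq hev)
  push_cast at this
  simp only [pow_one] at this
  linear_combination this

/-- If `℘'` vanished at such a point `z`, then so would `℘''` by duplication; comparing orders of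
vanishing at `z` in `(℘')² = 4 (℘ - ℘(z))² (℘ + 2℘(z))` would make `℘` constant. -/
lemma P'_ne_zero_of_two_mul_notMem {z : ℂ} (hz : z ∉ L.lattice) (h2z : 2 * z ∉ L.lattice) :
    ℘'[L] z ≠ 0 := by
  intro h0
  have h2 : 6 * ℘[L] z ^ 2 - L.g₂ / 2 = 0 := by
    have := duplication L hz h2z
    rw [h0] at this
    simpa using this.symm
  have h3 := L.derivWeierstrassP_sq z hz
  rw [h0] at h3
  have hA := L.analyticOnNhd_weierstrassP z hz
  have hB := L.analyticOnNhd_derivWeierstrassP z hz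
  have hu : AnalyticAt ℂ (fun w ↦ ℘[L] w - ℘[L] z) z := hA.sub analyticAt_const
  have hv : AnalyticAt ℂ (fun w ↦ 4 * (℘[L] w + 2 * ℘[L] z)) z :=
    analyticAt_const.mul (hA.add analyticAt_const)
  have hev : ℘'[L] ^ 2 =ᶠ[𝓝 z] (fun w ↦ ℘[L] w - ℘[L] z) ^ 2 *
      fun w ↦ 4 * (℘[L] w + 2 * ℘[L] z) := by
    filter_upwards [eventually_notMem_lattice L hz] with w hw
    have := L.derivWeierstrassP_sq w hw
    simp only [Pi.pow_apply, Pi.mul_apply]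
    linear_combination this - h3 + (2 * ℘[L] w - 2 * ℘[L] z) * h2
  have ho := analyticOrderAt_congr hev
  rw [analyticOrderAt_pow hB, analyticOrderAt_mul (hu.pow 2) hv, analyticOrderAt_pow hu] at ho
  have hd := hA.analyticOrderAt_deriv_add_one
  rw [deriv_weierstrassP] at hd
  rw [← hd] at ho
  rcases eq_or_ne (analyticOrderAt ℘'[L] z) ⊤ with h | h
  · rw [h] at hd
    have : ∀ᶠ w in 𝓝 z, ℘[L] w - ℘[L] z = 0 := analyticOrderAt_eq_top.mp (by simpa using hd.symm)
    exact not_eventually_const_P L hz (by filter_upwards [this] with w hw using sub_eq_zero.mp hw)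
  · lift analyticOrderAt ℘'[L] z to ℕ using h with n
    have : (2 : ℕ) • (n + 1 : ℕ∞) ≤ 2 • (n : ℕ∞) := by
      rw [ho]; exact le_self_add
    rw [nsmul_eq_mul, nsmul_eq_mul] at this
    norm_cast at this
    omega

lemma P'_half_period {u : ℂ} (h : 2 * u ∈ L.lattice) : ℘'[L] u = 0 := by
  have h1 := L.derivWeierstrassP_sub_coe u ⟨2 * u, h⟩
  have h2 := L.derivWeierstrassP_neg u
  simp only [show u - 2 * u = -u by ring] at h1
  rw [h2] at h1
  linear_combination -h1 / 2

/-- Values of `℘` and `℘'` at `2z` lie in every field containing `g₂` and the values at `z`. -/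
lemma double_mem (K : IntermediateField ℚ ℂ) (hg : L.g₂ ∈ K) {z : ℂ} (hz : z ∉ L.lattice)
    (h2z : 2 * z ∉ L.lattice) (h1 : ℘[L] z ∈ K) (h2 : ℘'[L] z ∈ K) :
    ℘[L] (2 * z) ∈ K ∧ ℘'[L] (2 * z) ∈ K := by
  have hne := P'_ne_zero_of_two_mul_notMem L hz h2z
  have n2 : (2 : ℂ) ∈ K := ofNat_mem K 2
  have n4 : (4 : ℂ) ∈ K := ofNat_mem K 4
  have n6 : (6 : ℂ) ∈ K := ofNat_mem K 6
  have n8 : (8 : ℂ) ∈ K := ofNat_mem K 8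
  have n24 : (24 : ℂ) ∈ K := ofNat_mem K 24
  have hq : 6 * ℘[L] z ^ 2 - L.g₂ / 2 ∈ K := sub_mem (mul_mem n6 (pow_mem h1 2)) (div_mem hg n2)
  have e1 : ℘[L] (2 * z) =
      (6 * ℘[L] z ^ 2 - L.g₂ / 2) ^ 2 / (4 * ℘'[L] z ^ 2) - 2 * ℘[L] z := by
    have := duplication L hz h2z
    rw [← this]
    field_simp
    ring
  have m1 : ℘[L] (2 * z) ∈ K := by
    rw [e1]
    exact sub_mem (div_mem (pow_mem hq 2) (mul_mem n4 (pow_mem h2 2))) (mul_mem n2 h1)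
  refine ⟨m1, ?_⟩
  have e2 : ℘'[L] (2 * z) = (24 * (6 * ℘[L] z ^ 2 - L.g₂ / 2) * ℘[L] z * ℘'[L] z -
      8 * ℘'[L] z * (6 * ℘[L] z ^ 2 - L.g₂ / 2) * (℘[L] (2 * z) + 2 * ℘[L] z)) /
        (8 * ℘'[L] z ^ 2) - ℘'[L] z := by
    have := duplication' L hz h2z
    rw [← this]
    field_simp
    ring
  rw [e2]
  exact sub_mem (div_mem (sub_mem (mul_mem (mul_mem (mul_mem n24 hq) h1) h2)
    (mul_mem (mul_mem (mul_mem n8 h2) hq) (add_mem m1 (mul_mem n2 h1))))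
    (mul_mem n8 (pow_mem h2 2))) h2

end AdditionFormula

/-! ### Algebraic relations between `℘(z)` and `℘(αz + b)` -/

section Relations

open Filter Topology PeriodPair

variable (L : PeriodPair)

lemma countable_affine_preimage {a : ℂ} (ha : a ≠ 0) (b : ℂ) :
    {z : ℂ | a * z + b ∈ L.lattice}.Countable := by
  refine (countable_lattice L).preimage_of_injOn (f := fun z ↦ a * z + b) ?_
  intro x _ y _ h
  simpa [ha] using h

lemma eventually_affine_notMem {a b z : ℂ} (hz : a * z + b ∉ L.lattice) :
    ∀ᶠ u in 𝓝 z, a * u + b ∉ L.lattice := by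
  have : ContinuousAt (fun u : ℂ ↦ a * u + b) z := by fun_prop
  exact this.eventually (eventually_notMem_lattice L hz)

lemma analyticAt_P_affine {a b z : ℂ} (hz : a * z + b ∉ L.lattice) :
    AnalyticAt ℂ (fun u ↦ ℘[L] (a * u + b)) z :=
  AnalyticAt.fun_comp (g := ℘[L]) (f := fun u ↦ a * u + b)
    (L.analyticOnNhd_weierstrassP _ hz) (by fun_prop)

/-- A translation that preserves `℘` near one point is a translation by a period: otherwise
`℘` would be bounded near its pole `0`. -/
lemma mem_lattice_of_translation {c u₀ : ℂ} (h1 : u₀ ∉ L.lattice) (h2 : u₀ + c ∉ L.lattice)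
    (h : ∀ᶠ u in 𝓝 u₀, ℘[L] u - ℘[L] (u + c) = 0) : c ∈ L.lattice := by
  by_contra hc
  let T : Set ℂ := (L.lattice : Set ℂ) ∪ {z | 1 * z + c ∈ L.lattice}
  have hT : T.Countable := (countable_lattice L).union (countable_affine_preimage L one_ne_zero c)
  have hmem : ∀ u, u ∈ Tᶜ ↔ u ∉ L.lattice ∧ u + c ∉ L.lattice := fun u ↦ by simp [T]
  have han : AnalyticOnNhd ℂ (fun u ↦ ℘[L] u - ℘[L] (u + c)) Tᶜ := fun u hu ↦
    (L.analyticOnNhd_weierstrassP u ((hmem u).mp hu).1).sub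
      (by simpa using analyticAt_P_affine L (a := 1) (b := c) (by simpa using ((hmem u).mp hu).2))
  have hEq := han.eqOn_zero_of_preconnected_of_eventuallyEq_zero
    (isPreconnected_compl_of_countable hT) ((hmem u₀).mpr ⟨h1, h2⟩) h
  have hc0 : (1 : ℂ) * 0 + c ∉ L.lattice := by simpa using hc
  have h3 : ℘[L] =ᶠ[𝓝[≠] 0] fun u ↦ ℘[L] (1 * u + c) := by
    filter_upwards [eventually_punctured_notMem_lattice L 0,
      nhdsWithin_le_nhds (eventually_affine_notMem L hc0)] with u hu hv
    have := hEq ((hmem u).mpr ⟨hu, by simpa using hv⟩)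
    simpa [sub_eq_zero] using this
  have h4 := meromorphicOrderAt_congr h3
  rw [L.order_weierstrassP 0 (zero_mem _)] at h4
  have h5 := (analyticAt_P_affine L hc0).meromorphicOrderAt_nonneg
  rw [← h4] at h5
  exact absurd h5 (by decide)

lemma eventually_eval_P_ne_zero {q : Polynomial ℂ} (hq : q ≠ 0) {z : ℂ} (hz : z ∉ L.lattice) :
    ∀ᶠ u in 𝓝[≠] z, q.eval (℘[L] u) ≠ 0 := by
  have hA := L.analyticOnNhd_weierstrassP z hz
  have han : AnalyticAt ℂ (fun u ↦ q.eval (℘[L] u)) z := by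
    simpa using hA.aeval_polynomial q
  rcases han.eventually_eq_zero_or_eventually_ne_zero with h | h
  · exfalso
    rcases hA.eventually_constant_or_nhds_le_map_nhds with h' | h'
    · exact not_eventually_const_P L hz h'
    · have h2 : ∀ᶠ y in 𝓝 (℘[L] z), q.eval y = 0 := h' (Filter.eventually_map.mpr h)
      have h3 : {y | q.eval y = 0}.Infinite := infinite_of_mem_nhds _ h2
      exact hq (Polynomial.eq_zero_of_infinite_isRoot q h3)
  · exact h

/-- A nontrivial algebraic relation between `℘(z)` and `℘(αz + b)` forces, for every period `ω`,
some nonzero multiple of `αω` to be a period. The values `℘(α(z + kω) + b)`, `k = 0, …, n`, are all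
roots of the same polynomial of degree `< n`, so two of them agree. -/
lemma exists_int_mul_mem {α b : ℂ} (hα : α ≠ 0) {n : ℕ} {c : Fin n → Fin n → ℂ}
    (hc : c ≠ 0) (hrel : ∀ z, z ∉ L.lattice → α * z + b ∉ L.lattice →
      ∑ i, ∑ j, c i j * ℘[L] z ^ (i : ℕ) * ℘[L] (α * z + b) ^ (j : ℕ) = 0)
    {ω : ℂ} (hω : ω ∈ L.lattice) : ∃ m : ℤ, m ≠ 0 ∧ m * α * ω ∈ L.lattice := by
  obtain ⟨i₀, hi₀⟩ := Function.ne_iff.mp hc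
  obtain ⟨j₀, hj₀⟩ := Function.ne_iff.mp hi₀
  -- `q(℘(z))` is a coefficient of the relation, as a polynomial in `℘(αz + b)`
  let q : Polynomial ℂ := ∑ i, Polynomial.C (c i j₀) * Polynomial.X ^ (i : ℕ)
  have hq : q ≠ 0 := by
    intro h
    apply hj₀
    have := congrArg (fun p ↦ p.coeff (i₀ : ℕ)) h
    simpa [q, Polynomial.finsetSum_coeff, Polynomial.coeff_X_pow, Fin.val_inj] using this
  have hT : ({z : ℂ | 1 * z + 0 ∈ L.lattice} ∪
      ⋃ k : Fin (n + 1), {z | α * z + (b + k * (α * ω)) ∈ L.lattice}).Countable :=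
    (countable_affine_preimage L one_ne_zero 0).union
      (Set.countable_iUnion fun k ↦ countable_affine_preimage L hα _)
  obtain ⟨z₀, hz₀⟩ := (hT.dense_compl ℝ).nonempty
  simp only [one_mul, add_zero, Set.mem_compl_iff, Set.mem_union, Set.mem_iUnion, not_or,
    not_exists, Set.mem_ofPred_eq] at hz₀
  obtain ⟨hz₁, hz₂⟩ := hz₀
  -- otherwise the functions `℘(α(z + kω) + b)` are pairwise distinct
  by_contra! hcon
  have hD : ∀ k l : Fin (n + 1), k ≠ l → ∀ᶠ z in 𝓝[≠] z₀,
      ℘[L] (α * z + (b + k * (α * ω))) - ℘[L] (α * z + (b + l * (α * ω))) ≠ 0 := by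
    intro k l hkl
    rcases ((analyticAt_P_affine L (hz₂ k)).sub
      (analyticAt_P_affine L (hz₂ l))).eventually_eq_zero_or_eventually_ne_zero with h | h
    · exfalso
      have hm : ((l : ℕ) : ℤ) - (k : ℕ) ≠ 0 := by
        rw [sub_ne_zero]; intro h'; exact hkl (Fin.ext (by exact_mod_cast h'.symm))
      refine hcon _ hm ?_
      have hinv : Tendsto (fun u : ℂ ↦ (u - (b + k * (α * ω))) / α)
          (𝓝 (α * z₀ + (b + k * (α * ω)))) (𝓝 z₀) := by
        have : ContinuousAt (fun u : ℂ ↦ (u - (b + k * (α * ω))) / α)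
          (α * z₀ + (b + k * (α * ω))) := by fun_prop
        have h' := this.tendsto
        simpa [hα] using h'
      refine mem_lattice_of_translation L (hz₂ k) ?_ ?_
      · have := hz₂ l
        convert this using 2
        push_cast
        ring
      · filter_upwards [hinv.eventually h] with u hu
        rw [← hu]
        simp only [Pi.sub_apply]
        have e1 : α * ((u - (b + k * (α * ω))) / α) + (b + k * (α * ω)) = u := by
          field_simp; ring
        have e2 : α * ((u - (b + k * (α * ω))) / α) + (b + l * (α * ω)) =
            u + (((l : ℕ) : ℤ) - (k : ℕ) : ℤ) * α * ω := by
          push_cast; field_simp; ring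
        rw [e1, e2]
    · exact h
  have hall : ∀ᶠ z in 𝓝[≠] z₀, ∀ k l : Fin (n + 1), k ≠ l →
      ℘[L] (α * z + (b + k * (α * ω))) - ℘[L] (α * z + (b + l * (α * ω))) ≠ 0 := by
    simp only [eventually_all]
    exact hD
  have hreg : ∀ᶠ z in 𝓝[≠] z₀, ∀ k : Fin (n + 1), α * z + (b + k * (α * ω)) ∉ L.lattice := by
    rw [eventually_all]
    exact fun k ↦ nhdsWithin_le_nhds (eventually_affine_notMem L (hz₂ k))
  -- at a generic `z` their values are pairwise distinct roots of the nonzero polynomial `Q`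
  obtain ⟨z, h1, h2, h3, h4⟩ := (hall.and (hreg.and ((eventually_eval_P_ne_zero L hq hz₁).and
    (nhdsWithin_le_nhds (eventually_notMem_lattice L hz₁))))).exists
  let Q : Polynomial ℂ :=
    ∑ j : Fin n, Polynomial.C (∑ i, c i j * ℘[L] z ^ (i : ℕ)) * Polynomial.X ^ (j : ℕ)
  have hQ : Q ≠ 0 := by
    intro h
    apply h3
    have := congrArg (fun p ↦ p.coeff (j₀ : ℕ)) h
    simp only [Q, Polynomial.finsetSum_coeff, Polynomial.coeff_C_mul, Polynomial.coeff_X_pow,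
      Fin.val_inj, Polynomial.coeff_zero, mul_ite, mul_one, mul_zero, Finset.sum_ite_eq,
      Finset.mem_univ, if_true] at this
    simpa [q, Polynomial.eval_finsetSum] using this
  have hdeg : Q.natDegree ≤ n - 1 := by
    refine Polynomial.natDegree_sum_le_of_forall_le _ _ fun j _ ↦ ?_
    refine (Polynomial.natDegree_C_mul_X_pow_le _ _).trans ?_
    have := j.2
    omega
  have hn : 0 < n := i₀.pos
  have hroot : ∀ k : Fin (n + 1), Q.IsRoot (℘[L] (α * z + (b + k * (α * ω)))) := by
    intro k
    have hk : (k : ℂ) * ω ∈ L.lattice := by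
      have := L.lattice.smul_mem ((k : ℕ) : ℤ) hω
      simpa using this
    have e : α * (z + k * ω) + b = α * z + (b + k * (α * ω)) := by ring
    have hz' : z + k * ω ∉ L.lattice := fun h ↦ h4 (by simpa using sub_mem h hk)
    have := hrel (z + k * ω) hz' (by rw [e]; exact h2 k)
    rw [e, show ℘[L] (z + k * ω) = ℘[L] z from L.weierstrassP_add_coe z ⟨_, hk⟩,
      Finset.sum_comm] at this
    simpa [Polynomial.IsRoot, Q, Polynomial.eval_finsetSum, Finset.sum_mul] using this
  have hinj : Function.Injective fun k : Fin (n + 1) ↦ ℘[L] (α * z + (b + k * (α * ω))) := by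
    intro k l hkl
    by_contra hne
    exact h1 k l hne (sub_eq_zero.mpr hkl)
  have hcard := Polynomial.card_le_degree_of_subset_roots (p := Q)
    (Z := Finset.univ.image fun k : Fin (n + 1) ↦ ℘[L] (α * z + (b + k * (α * ω)))) (by
      intro y hy
      simp only [Finset.image_val, Multiset.mem_dedup, Multiset.mem_map] at hy
      obtain ⟨k, _, rfl⟩ := hy
      exact (Polynomial.mem_roots hQ).mpr (hroot k))
  rw [Finset.card_image_of_injective _ hinj, Finset.card_univ, Fintype.card_fin] at hcard
  omega

/-- `℘(μ₁z + a)` and `℘(μ₂z + b)` are algebraically independent unless `μ₂/μ₁` lies in the field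
of endomorphisms. -/
lemma mem_endQ_of_relation {α μ a b : ℂ} (hμ : μ ≠ 0) (hα : α ≠ 0) {n : ℕ}
    {c : Fin n → Fin n → ℂ} (hc : c ≠ 0)
    (hrel : ∀ z, μ * z + a ∉ L.lattice → α * μ * z + b ∉ L.lattice →
      ∑ i, ∑ j, c i j * ℘[L] (μ * z + a) ^ (i : ℕ) * ℘[L] (α * μ * z + b) ^ (j : ℕ) = 0) :
    α ∈ endQ L.ω₁ L.ω₂ := by
  have hrel' : ∀ z, z ∉ L.lattice → α * z + (b - α * a) ∉ L.lattice →
      ∑ i, ∑ j, c i j * ℘[L] z ^ (i : ℕ) * ℘[L] (α * z + (b - α * a)) ^ (j : ℕ) = 0 := by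
    intro z h1 h2
    have e1 : μ * ((z - a) / μ) + a = z := by field_simp; ring
    have e2 : α * μ * ((z - a) / μ) + b = α * z + (b - α * a) := by field_simp; ring
    have := hrel ((z - a) / μ) (by rwa [e1]) (by rwa [e2])
    rwa [e1, e2] at this
  obtain ⟨m₁, hm₁, h₁⟩ := exists_int_mul_mem L hα hc hrel' L.ω₁_mem_lattice
  obtain ⟨m₂, hm₂, h₂⟩ := exists_int_mul_mem L hα hc hrel' L.ω₂_mem_lattice
  refine ⟨m₁ * m₂, mul_ne_zero hm₁ hm₂, ?_⟩
  rintro w ⟨x, y, rfl⟩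
  rw [mem_latticePts_iff]
  have := add_mem (L.lattice.smul_mem (m₂ * x) h₁) (L.lattice.smul_mem (m₁ * y) h₂)
  simp only [zsmul_eq_mul] at this
  convert this using 1
  push_cast
  ring

end Relations

/-! ### Power series with integral derivatives over a number field -/

section IntegralSeries

open Filter Topology PeriodPair
open NumberField
open scoped Nat
open Finset.HasAntidiagonal (antidiagonal mem_antidiagonal)

lemma isIntegral_natCast' {K : Type*} [Field K] (n : ℕ) : IsIntegral ℤ (n : K) := by
  simpa using (isIntegral_algebraMap (R := ℤ) (A := K) (x := (n : ℤ)))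

lemma factorial_eq_choose_mul {K : Type*} [Field K] {n : ℕ} {p : ℕ × ℕ} (hp : p.1 + p.2 = n) :
    (n ! : K) = (n.choose p.1 : K) * p.1 ! * p.2 ! := by
  rw [← hp, ← Nat.choose_mul_factorial_mul_factorial (Nat.le_add_right p.1 p.2)]
  push_cast
  rw [Nat.add_sub_cancel_left]

variable {K : Type*} [Field K]

/-- All formal derivatives `n! cₙ` of the power series `∑ cₙ Xⁿ` at the origin are algebraic
integers. -/
def IntPS (F : PowerSeries K) : Prop := ∀ n, IsIntegral ℤ ((n ! : K) * PowerSeries.coeff n F)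

lemma IntPS.mul {F G : PowerSeries K} (hF : IntPS F) (hG : IntPS G) : IntPS (F * G) := by
  intro n
  rw [PowerSeries.coeff_mul, Finset.mul_sum]
  refine IsIntegral.sum _ fun p hp ↦ ?_
  rw [mem_antidiagonal] at hp
  have h : (n ! : K) = (n.choose p.1 : K) * p.1 ! * p.2 ! := factorial_eq_choose_mul hp
  have := ((isIntegral_natCast' (K := K) (n.choose p.1)).mul (hF p.1)).mul (hG p.2)
  rw [h]
  convert this using 1
  ring

lemma IntPS.one : IntPS (1 : PowerSeries K) := by
  intro n
  rw [PowerSeries.coeff_one]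
  split_ifs
  · simpa using isIntegral_natCast' (K := K) (n !)
  · simpa using isIntegral_zero

lemma IntPS.pow {F : PowerSeries K} (hF : IntPS F) (i : ℕ) : IntPS (F ^ i) := by
  induction i with
  | zero => simpa using IntPS.one
  | succ i ih => rw [pow_succ]; exact ih.mul hF

variable [NumberField K]

/-- The norm `∑ |cₙ| ρⁿ` of the power series `∑ cₙ Xⁿ`, with `|·|` the house, is at most `M`; this is
stated through the partial sums. The norm is submultiplicative. -/
def BdPS (ρ M : ℝ) (F : PowerSeries K) : Prop :=
  ∀ n, ∑ k ∈ Finset.range n, house (PowerSeries.coeff k F) * ρ ^ k ≤ M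

lemma BdPS.nonneg {ρ M : ℝ} {F : PowerSeries K} (hF : BdPS ρ M F) : 0 ≤ M := by
  simpa using hF 0

lemma BdPS.mul {ρ M M' : ℝ} (hρ : 0 ≤ ρ) {F G : PowerSeries K} (hF : BdPS ρ M F)
    (hG : BdPS ρ M' G) : BdPS ρ (M * M') (F * G) := by
  intro n
  calc ∑ k ∈ Finset.range n, house (PowerSeries.coeff k (F * G)) * ρ ^ k
      ≤ ∑ k ∈ Finset.range n, ∑ i ∈ Finset.range (k + 1),
          (house (PowerSeries.coeff i F) * ρ ^ i) *
            (house (PowerSeries.coeff (k - i) G) * ρ ^ (k - i)) := by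
        refine Finset.sum_le_sum fun k _ ↦ ?_
        rw [PowerSeries.coeff_mul,
          Finset.Nat.sum_antidiagonal_eq_sum_range_succ
            (fun i j ↦ PowerSeries.coeff i F * PowerSeries.coeff j G)]
        refine (mul_le_mul_of_nonneg_right (house_sum_le_sum_house _ _) (by positivity)).trans ?_
        rw [Finset.sum_mul]
        refine Finset.sum_le_sum fun i hi ↦ ?_
        have hik : i + (k - i) = k := by have := Finset.mem_range.mp hi; omega
        refine (mul_le_mul_of_nonneg_right (house_mul_le _ _) (by positivity)).trans_eq ?_
        nth_rewrite 2 [← hik]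
        rw [pow_add]
        ring
    _ = ∑ i ∈ Finset.range n, (house (PowerSeries.coeff i F) * ρ ^ i) *
          ∑ j ∈ Finset.range (n - i), house (PowerSeries.coeff j G) * ρ ^ j := by
        rw [Finset.sum_range_diag_flip n fun i j ↦ (house (PowerSeries.coeff i F) * ρ ^ i) *
            (house (PowerSeries.coeff j G) * ρ ^ j)]
        simp only [Finset.mul_sum]
    _ ≤ ∑ i ∈ Finset.range n, (house (PowerSeries.coeff i F) * ρ ^ i) * M' := by
        refine Finset.sum_le_sum fun i _ ↦ mul_le_mul_of_nonneg_left (hG _) ?_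
        exact mul_nonneg (house_nonneg _) (by positivity)
    _ ≤ M * M' := by
        rw [← Finset.sum_mul]
        exact mul_le_mul_of_nonneg_right (hF n) hG.nonneg

lemma house_one : house (1 : K) = 1 := by
  simpa using house_intCast (K := K) 1

lemma house_zero : house (0 : K) = 0 := by
  simpa using house_intCast (K := K) 0

lemma house_nsmul_le (n : ℕ) (x : K) : house ((n : K) * x) = n * house x := house_nat_mul x n

lemma BdPS.one {ρ : ℝ} : BdPS ρ 1 (1 : PowerSeries K) := by
  intro n
  rcases n with _ | n
  · simp
  · rw [Finset.sum_eq_single 0]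
    · simp [house_one]
    · intro k _ hk
      simp [PowerSeries.coeff_one, hk, house_zero]
    · simp

lemma BdPS.pow {ρ M : ℝ} (hρ : 0 ≤ ρ) {F : PowerSeries K} (hF : BdPS ρ M F) (i : ℕ) :
    BdPS ρ (M ^ i) (F ^ i) := by
  induction i with
  | zero => simpa using BdPS.one
  | succ i ih => rw [pow_succ, pow_succ]; exact ih.mul hρ hF

lemma BdPS.house_coeff_le {ρ M : ℝ} (hρ : 0 ≤ ρ) {F : PowerSeries K} (hF : BdPS ρ M F) (n : ℕ) :
    house (PowerSeries.coeff n F) * ρ ^ n ≤ M := by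
  refine le_trans ?_ (hF (n + 1))
  exact Finset.single_le_sum
    (f := fun k ↦ house (PowerSeries.coeff k F) * ρ ^ k)
    (fun i _ ↦ mul_nonneg (house_nonneg _) (by positivity)) (Finset.self_mem_range_succ n)

/-- The houses of the coefficients grow at most geometrically. -/
def GeoPS (A : ℝ) (F : PowerSeries K) : Prop := ∀ n, house (PowerSeries.coeff n F) ≤ A ^ (n + 1)

lemma GeoPS.mono {A A' : ℝ} (hA : 0 ≤ A) (h : A ≤ A') {F : PowerSeries K} (hF : GeoPS A F) :
    GeoPS A' F := fun n ↦ (hF n).trans (pow_le_pow_left₀ hA h _)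

lemma GeoPS.bdPS {A : ℝ} (hA : 0 < A) {F : PowerSeries K} (hF : GeoPS A F) :
    BdPS (2 * A)⁻¹ (2 * A) F := by
  intro n
  have h : ∀ k, house (PowerSeries.coeff k F) * (2 * A)⁻¹ ^ k ≤ A * (1 / 2) ^ k := by
    intro k
    refine (mul_le_mul_of_nonneg_right (hF k) (by positivity)).trans_eq ?_
    rw [pow_succ, inv_pow, mul_pow, one_div, inv_pow]
    field_simp
  refine (Finset.sum_le_sum fun k _ ↦ h k).trans ?_
  rw [← Finset.mul_sum]
  have := sum_geometric_two_le n
  nlinarith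

lemma house_coeff_pow_mul_pow_le {A : ℝ} (hA : 0 < A) {F G : PowerSeries K} (hF : GeoPS A F)
    (hG : GeoPS A G) (i j n : ℕ) :
    house (PowerSeries.coeff n (F ^ i * G ^ j)) ≤ (2 * A) ^ (i + j + n) := by
  have hρ : (0 : ℝ) ≤ (2 * A)⁻¹ := by positivity
  have := (((hF.bdPS hA).pow hρ i).mul hρ ((hG.bdPS hA).pow hρ j)).house_coeff_le hρ n
  rw [inv_pow, ← div_eq_mul_inv, div_le_iff₀ (by positivity)] at this
  rwa [pow_add, pow_add]

/-- Arithmetic of the differential equation `f'' = 6f² - γ`: power series solutions with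
integral initial values have integral derivatives and geometrically bounded coefficients. -/
lemma exists_intPS (ι : K →+* ℂ) (T : PowerSeries ℂ) (γ x₀ x₁ : 𝓞 K)
    (h₀ : PowerSeries.coeff 0 T = ι x₀) (h₁ : PowerSeries.coeff 1 T = ι x₁)
    (hT : ∀ n : ℕ, ((n + 2) * (n + 1) : ℂ) * PowerSeries.coeff (n + 2) T =
      6 * PowerSeries.coeff n (T * T) - if n = 0 then ι γ else 0) :
    ∃ F : PowerSeries K, PowerSeries.map ι F = T ∧ IntPS F ∧ ∃ A : ℝ, 0 ≤ A ∧ GeoPS A F := by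
  have hex : ∀ n, ∃ c : K, ι c = PowerSeries.coeff n T := by
    intro n
    induction n using Nat.strong_induction_on with
    | _ n ih =>
      rcases n with _ | _ | n
      · exact ⟨x₀, h₀.symm⟩
      · exact ⟨x₁, h₁.symm⟩
      · have hne : ((n + 2) * (n + 1) : ℂ) ≠ 0 := by norm_cast
        have h : ∃ c : K, ι c = PowerSeries.coeff n (T * T) := by
          rw [PowerSeries.coeff_mul]
          have : ∀ p : ℕ × ℕ, ∃ c : K, p ∈ antidiagonal n →
              ι c = PowerSeries.coeff p.1 T * PowerSeries.coeff p.2 T := by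
            intro p
            by_cases hp : p ∈ antidiagonal n
            · have hp' := mem_antidiagonal.mp hp
              obtain ⟨c, hc⟩ := ih p.1 (by omega)
              obtain ⟨d, hd⟩ := ih p.2 (by omega)
              exact ⟨c * d, fun _ ↦ by rw [map_mul, hc, hd]⟩
            · exact ⟨0, fun h ↦ absurd h hp⟩
          choose c hc using this
          exact ⟨∑ p ∈ antidiagonal n, c p, by rw [map_sum]; exact Finset.sum_congr rfl hc⟩
        obtain ⟨c, hc⟩ := h
        refine ⟨(6 * c - if n = 0 then (γ : K) else 0) / ((n + 2) * (n + 1)), ?_⟩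
        have := hT n
        rw [← hc] at this
        rw [map_div₀, div_eq_iff (by rw [map_mul, map_add, map_add, map_natCast, map_ofNat, map_one]; exact hne)]
        simp only [map_sub, map_mul, map_add, map_ofNat, map_natCast, map_one, apply_ite ι, map_zero]
        rw [← this]
        ring
  choose c hc using hex
  let F : PowerSeries K := PowerSeries.mk c
  have hFT : PowerSeries.map ι F = T := by
    ext n
    simp [F, hc]
  have hrec : ∀ n : ℕ, (((n + 2) * (n + 1) : ℕ) : K) * PowerSeries.coeff (n + 2) F =
      6 * PowerSeries.coeff n (F * F) - if n = 0 then (γ : K) else 0 := by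
    intro n
    apply ι.injective
    have h2 : ι (PowerSeries.coeff n (F * F)) = PowerSeries.coeff n (T * T) := by
      rw [← hFT, ← map_mul, PowerSeries.coeff_map]
    have := hT n
    rw [← h2, ← hc (n + 2)] at this
    simp only [map_sub, map_mul, map_ofNat, map_natCast, apply_ite ι, map_zero,
      F, PowerSeries.coeff_mk] at this ⊢
    push_cast
    exact this
  have hc0 : PowerSeries.coeff 0 F = x₀ := ι.injective (by rw [← h₀, ← hFT, PowerSeries.coeff_map])
  have hc1 : PowerSeries.coeff 1 F = x₁ := ι.injective (by rw [← h₁, ← hFT, PowerSeries.coeff_map])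
  refine ⟨F, hFT, ?_, ?_⟩
  · intro n
    induction n using Nat.strong_induction_on with
    | _ n ih =>
      rcases n with _ | _ | n
      · rw [hc0]; simpa using x₀.isIntegral_coe
      · rw [hc1]; simpa using x₁.isIntegral_coe
      · have e : ((n + 2)! : K) * PowerSeries.coeff (n + 2) F =
            6 * ((n ! : K) * PowerSeries.coeff n (F * F)) - if n = 0 then (γ : K) else 0 := by
          have : ((n + 2)! : K) = (n ! : K) * (((n + 2) * (n + 1) : ℕ) : K) := by
            rw [Nat.factorial_succ, Nat.factorial_succ]; push_cast; ring
          rw [this, mul_assoc, hrec]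
          split_ifs with h
          · subst h; simp
          · ring
        rw [e]
        refine IsIntegral.sub ((isIntegral_natCast' (K := K) 6).mul ?_) ?_
        · rw [PowerSeries.coeff_mul, Finset.mul_sum]
          refine IsIntegral.sum _ fun p hp ↦ ?_
          rw [mem_antidiagonal] at hp
          have h : (n ! : K) = (n.choose p.1 : K) * p.1 ! * p.2 ! := factorial_eq_choose_mul hp
          have := ((isIntegral_natCast' (K := K) (n.choose p.1)).mul (ih p.1 (by omega))).mul
            (ih p.2 (by omega))
          rw [h]
          convert this using 1
          ring
        · split_ifs
          · exact γ.isIntegral_coe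
          · exact isIntegral_zero
  · set A : ℝ := 4 + house (x₀ : K) + house (x₁ : K) + house (γ : K) with hA
    have n0 := house_nonneg (x₀ : K)
    have n1 := house_nonneg (x₁ : K)
    have n2 := house_nonneg (γ : K)
    have hA4 : 4 ≤ A := by linarith
    refine ⟨A, by linarith, fun n ↦ ?_⟩
    induction n using Nat.strong_induction_on with
    | _ n ih =>
      rcases n with _ | _ | n
      · rw [hc0]; simp; linarith
      · rw [hc1]; norm_num; nlinarith
      · have h1 : house (PowerSeries.coeff n (F * F)) ≤ (n + 1) * A ^ (n + 2) := by
          rw [PowerSeries.coeff_mul]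
          refine (house_sum_le_sum_house _ _).trans ?_
          have : ∀ p ∈ antidiagonal n,
              house (PowerSeries.coeff p.1 F * PowerSeries.coeff p.2 F) ≤ A ^ (n + 2) := by
            intro p hp
            rw [mem_antidiagonal] at hp
            refine (house_mul_le _ _).trans ((mul_le_mul (ih p.1 (by omega)) (ih p.2 (by omega))
              (house_nonneg _) (by positivity)).trans_eq ?_)
            rw [← pow_add]
            congr 1
            omega
          refine (Finset.sum_le_sum this).trans_eq ?_
          simp
        have h2 : house (6 * PowerSeries.coeff n (F * F) - if n = 0 then (γ : K) else 0) ≤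
            6 * house (PowerSeries.coeff n (F * F)) + A := by
          rw [sub_eq_add_neg]
          refine (house_add_le _ _).trans (add_le_add ?_ ?_)
          · exact (house_nat_mul (PowerSeries.coeff n (F * F)) 6).le
          · have : house (-(if n = 0 then (γ : K) else 0)) = house (if n = 0 then (γ : K) else 0) := by
              simp only [house, map_neg, norm_neg]
            rw [this]
            split_ifs
            · linarith
            · rw [house_zero]; linarith
        rw [← hrec, house_nat_mul] at h2
        push_cast at h2
        have hp : A ^ (n + 2 + 1) = A * A ^ (n + 2) := by ring
        have hAn : A ≤ A ^ (n + 2) := le_self_pow₀ (by linarith) (by omega)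
        have hn : (0 : ℝ) ≤ n := Nat.cast_nonneg n
        rw [hp]
        have hpos : (0 : ℝ) < (n + 2) * (n + 1) := by positivity
        refine le_of_mul_le_mul_left (h2.trans ?_) hpos
        have h3 : 6 * house (PowerSeries.coeff n (F * F)) + A ≤
            (6 * (n + 1) + 1) * A ^ (n + 2) := by nlinarith
        refine h3.trans ?_
        rw [← mul_assoc]
        refine mul_le_mul_of_nonneg_right ?_ (by positivity)
        nlinarith [mul_nonneg hn hn]

end IntegralSeries

/-! ### Siegel's lemma and the size inequality -/

section SiegelLemma

open Filter Topology PeriodPair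
open NumberField
open scoped Nat
open Finset.HasAntidiagonal (antidiagonal mem_antidiagonal)

/-- The combination `∑ αᵢⱼ Fⁱ Gʲ`. -/
def combPS {K : Type*} [Field K] {n : ℕ} (α : Fin n → Fin n → 𝓞 K) (F G : PowerSeries K) :
    PowerSeries K :=
  ∑ i, ∑ j, PowerSeries.C (α i j : K) * (F ^ (i : ℕ) * G ^ (j : ℕ))

lemma coeff_combPS {K : Type*} [Field K] {n : ℕ} (α : Fin n → Fin n → 𝓞 K) (F G : PowerSeries K)
    (k : ℕ) : PowerSeries.coeff k (combPS α F G) =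
      ∑ i, ∑ j, (α i j : K) * PowerSeries.coeff k (F ^ (i : ℕ) * G ^ (j : ℕ)) := by
  simp [combPS, PowerSeries.coeff_C_mul]

/-- Construction of the auxiliary function by Siegel's lemma: there are twice as many coefficients
as linear conditions, so that the exponent `p / (q - p)` in Siegel's lemma is `1`. The `n`-th
condition is multiplied by `n!` to make its coefficients integral. -/
lemma exists_combPS (K : Type) [Field K] [NumberField K] : ∃ C : ℝ, 1 ≤ C ∧
    ∀ (m t : ℕ), 0 < m → 0 < t → ∀ (A : ℝ), 1 ≤ A → ∀ (F G : Fin m → PowerSeries K),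
      (∀ k, IntPS (F k)) → (∀ k, IntPS (G k)) → (∀ k, GeoPS A (F k)) → (∀ k, GeoPS A (G k)) →
      ∃ α : Fin (2 * m * t) → Fin (2 * m * t) → 𝓞 K, α ≠ 0 ∧
        (∀ k, ∀ n < 2 * m * t ^ 2, PowerSeries.coeff n (combPS α (F k) (G k)) = 0) ∧
        ∀ i j, house (α i j : K) ≤
          C * (2 * m * t : ℕ) ^ 2 * ((2 * m * t ^ 2)! * (2 * A) ^ (6 * m * t ^ 2)) := by
  classical
  obtain ⟨c, hc⟩ : ∃ c : ℝ, ∀ {α β : Type} [Fintype α] [Fintype β] (a : Matrix α β (𝓞 K)),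
      a ≠ 0 → ∀ {p q : ℕ}, 0 < p → p < q → Fintype.card β = q → ∀ {A : ℝ},
      (∀ k l, house ((algebraMap (𝓞 K) K) (a k l)) ≤ A) → Fintype.card α = p →
      ∃ ξ : β → 𝓞 K, ξ ≠ 0 ∧ a.mulVec ξ = 0 ∧ ∀ l, house (ξ l : K) ≤
        c * (c * q * A) ^ ((p : ℝ) / (q - p)) :=
    ⟨_, fun a ha _ _ h0 h1 h2 _ h3 h4 ↦
      house.exists_ne_zero_int_vec_house_le K a ha h0 h1 h2 h3 h4⟩
  refine ⟨1 + c ^ 2, by nlinarith [sq_nonneg c], ?_⟩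
  intro m t hm ht A hA F G hF hG hFA hGA
  set L := 2 * m * t with hL
  set N := 2 * m * t ^ 2 with hN
  have hintg : ∀ (r : Fin m × Fin N) (l : Fin L × Fin L), IsIntegral ℤ (((r.2 : ℕ)! : K) *
      PowerSeries.coeff (r.2 : ℕ) (F r.1 ^ (l.1 : ℕ) * G r.1 ^ (l.2 : ℕ))) := fun r l ↦
    (((hF r.1).pow l.1).mul ((hG r.1).pow l.2)) r.2
  let a : Matrix (Fin m × Fin N) (Fin L × Fin L) (𝓞 K) := fun r l ↦ ⟨_, hintg r l⟩
  have hL0 : 0 < L := by positivity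
  have hN0 : 0 < N := by positivity
  have ha : a ≠ 0 := by
    intro h
    have h1 := congrFun (congrFun h (⟨0, hm⟩, ⟨0, hN0⟩)) (⟨0, hL0⟩, ⟨0, hL0⟩)
    have h2 : ((0 ! : ℕ) : K) * PowerSeries.coeff 0 (F ⟨0, hm⟩ ^ 0 * G ⟨0, hm⟩ ^ 0) = 0 :=
      congrArg (fun x : 𝓞 K ↦ (x : K)) h1
    simp at h2
  have habs : ∀ k l, house ((algebraMap (𝓞 K) K) (a k l)) ≤ N ! * (2 * A) ^ (6 * m * t ^ 2) := by
    intro r l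
    change house (((r.2 : ℕ)! : K) *
      PowerSeries.coeff (r.2 : ℕ) (F r.1 ^ (l.1 : ℕ) * G r.1 ^ (l.2 : ℕ))) ≤ _
    rw [house_nat_mul]
    have h1 := house_coeff_pow_mul_pow_le (by linarith) (hFA r.1) (hGA r.1) l.1 l.2 r.2
    have h2 : ((r.2 : ℕ)! : ℝ) ≤ (N ! : ℝ) := by
      exact_mod_cast Nat.factorial_le r.2.2.le
    refine mul_le_mul h2 (h1.trans (pow_le_pow_right₀ (by linarith) ?_)) (house_nonneg _)
      (by positivity)
    have e1 := l.1.2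
    have e2 := l.2.2
    have e3 := r.2.2
    have e4 : L ≤ N := by
      rw [hL, hN]; exact Nat.mul_le_mul le_rfl (Nat.le_self_pow two_ne_zero t)
    have e5 : 6 * m * t ^ 2 = 3 * N := by rw [hN]; ring
    omega
  have hLN : L * L = 2 * (m * N) := by rw [hL, hN]; ring
  have hp : 0 < m * N := by positivity
  obtain ⟨ξ, hξ, hmul, hbd⟩ := hc a ha (p := m * N) (q := L * L) hp (by omega) (by simp) habs
    (by simp)
  refine ⟨fun i j ↦ ξ (i, j), ?_, ?_, ?_⟩
  · intro h
    apply hξ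
    ext ⟨i, j⟩
    have := congrFun (congrFun h i) j
    simp only [Pi.zero_apply] at this ⊢
    rw [this]
  · intro k n hn
    have h1 := congrFun hmul (k, ⟨n, hn⟩)
    have h2 := congrArg (fun x : 𝓞 K ↦ (x : K)) h1
    simp only [Matrix.mulVec, dotProduct, Pi.zero_apply, map_zero, map_sum, map_mul] at h2
    rw [Fintype.sum_prod_type] at h2
    have h3 : (n ! : K) * PowerSeries.coeff n (combPS (fun i j ↦ ξ (i, j)) (F k) (G k)) = 0 := by
      rw [coeff_combPS, ← h2, Finset.mul_sum]
      refine Finset.sum_congr rfl fun i _ ↦ ?_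
      rw [Finset.mul_sum]
      refine Finset.sum_congr rfl fun j _ ↦ ?_
      change _ = ((n ! : K) * _) * _
      ring
    exact (mul_eq_zero.mp h3).resolve_left (by exact_mod_cast Nat.factorial_ne_zero n)
  · intro i j
    have h1 := hbd (i, j)
    have h2 : ((m * N : ℕ) : ℝ) / ((L * L : ℕ) - (m * N : ℕ)) = 1 := by
      rw [hLN]
      have : ((m * N : ℕ) : ℝ) ≠ 0 := by exact_mod_cast hp.ne'
      push_cast at this ⊢
      field_simp
      ring
    rw [h2, Real.rpow_one] at h1
    refine h1.trans ?_
    have h3 : (0 : ℝ) ≤ (L : ℝ) ^ 2 * (N ! * (2 * A) ^ (6 * m * t ^ 2)) := by positivity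
    push_cast
    nlinarith

lemma house_coeff_combPS_le {K : Type*} [Field K] [NumberField K] {n : ℕ}
    {α : Fin n → Fin n → 𝓞 K} {F G : PowerSeries K} {A B : ℝ} (hA : 1 ≤ A)
    (hF : GeoPS A F) (hG : GeoPS A G) (hB : ∀ i j, house (α i j : K) ≤ B) (k : ℕ) :
    house (PowerSeries.coeff k (combPS α F G)) ≤ (n : ℝ) ^ 2 * (B * (2 * A) ^ (2 * n + k)) := by
  rw [coeff_combPS]
  refine (house_sum_le_sum_house _ _).trans ?_
  have : ∀ i ∈ Finset.univ, house (∑ j, (α i j : K) *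
      PowerSeries.coeff k (F ^ (i : ℕ) * G ^ (j : ℕ))) ≤ n * (B * (2 * A) ^ (2 * n + k)) := by
    intro i _
    refine (house_sum_le_sum_house _ _).trans ?_
    have : ∀ j ∈ Finset.univ, house ((α i j : K) *
        PowerSeries.coeff k (F ^ (i : ℕ) * G ^ (j : ℕ))) ≤ B * (2 * A) ^ (2 * n + k) := by
      intro j _
      refine (house_mul_le _ _).trans ?_
      refine mul_le_mul (hB i j) ((house_coeff_pow_mul_pow_le (by linarith) hF hG i j k).trans
        (pow_le_pow_right₀ (by linarith) (by omega))) (house_nonneg _)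
        ((house_nonneg _).trans (hB i j))
    refine (Finset.sum_le_sum this).trans_eq (by simp)
  refine (Finset.sum_le_sum this).trans_eq ?_
  simp
  ring

lemma IntPS.combPS {K : Type*} [Field K] {n : ℕ} (α : Fin n → Fin n → 𝓞 K) {F G : PowerSeries K}
    (hF : IntPS F) (hG : IntPS G) : IntPS (combPS α F G) := by
  intro k
  rw [coeff_combPS, Finset.mul_sum]
  refine IsIntegral.sum _ fun i _ ↦ ?_
  rw [Finset.mul_sum]
  refine IsIntegral.sum _ fun j _ ↦ ?_
  have := (α i j).isIntegral_coe.mul (((hF.pow i).mul (hG.pow j)) k)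
  convert this using 1
  ring

/-- The size inequality: a nonzero algebraic integer has a norm of absolute value at least `1`. -/
lemma one_le_norm_mul_house_pow {K : Type*} [Field K] [NumberField K] (ι : K →+* ℂ) {γ : K}
    (hγ : IsIntegral ℤ γ) (h0 : γ ≠ 0) :
    1 ≤ ‖ι γ‖ * house γ ^ (Module.finrank ℚ K - 1) := by
  refine le_trans ?_ (norm_norm_le_norm_mul_house_pow γ ι)
  have h1 : IsIntegral ℤ (Algebra.norm ℚ γ) := Algebra.isIntegral_norm ℚ hγ
  obtain ⟨n, hn⟩ := IsIntegrallyClosed.isIntegral_iff.mp h1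
  have h2 : Algebra.norm ℚ γ ≠ 0 := Algebra.norm_ne_zero_iff.mpr h0
  have h3 : n ≠ 0 := by
    rintro rfl
    simp at hn
    exact h2 hn.symm
  rw [← hn]
  simp only [algebraMap_int_eq, eq_intCast]
  rw [Int.norm_cast_rat, Int.norm_eq_abs]
  exact_mod_cast Int.one_le_abs h3

end SiegelLemma

/-! ### Taylor series and division by zeros -/

section TaylorSeries

open Filter Topology PeriodPair
open NumberField
open scoped Nat
open Finset.HasAntidiagonal (antidiagonal mem_antidiagonal)

/-- The Taylor series of `f` at `w`, as a formal power series in the local coordinate `z - w`. -/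
def taylorPS (f : ℂ → ℂ) (w : ℂ) : PowerSeries ℂ :=
  PowerSeries.mk fun n ↦ iteratedDeriv n f w / n !

lemma coeff_taylorPS (f : ℂ → ℂ) (w : ℂ) (n : ℕ) :
    PowerSeries.coeff n (taylorPS f w) = iteratedDeriv n f w / n ! := by
  simp [taylorPS]

lemma taylorPS_congr {f g : ℂ → ℂ} {w : ℂ} (h : f =ᶠ[𝓝 w] g) : taylorPS f w = taylorPS g w := by
  ext n
  rw [coeff_taylorPS, coeff_taylorPS, h.iteratedDeriv_eq n]

lemma taylorPS_mul {f g : ℂ → ℂ} {w : ℂ} (hf : AnalyticAt ℂ f w) (hg : AnalyticAt ℂ g w) :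
    taylorPS (fun z ↦ f z * g z) w = taylorPS f w * taylorPS g w := by
  ext n
  rw [coeff_taylorPS, PowerSeries.coeff_mul,
    iteratedDeriv_fun_mul hf.contDiffAt hg.contDiffAt, Finset.sum_div,
    Finset.Nat.sum_antidiagonal_eq_sum_range_succ_mk]
  refine Finset.sum_congr rfl fun i hi ↦ ?_
  have hi' : i ≤ n := by simpa [Nat.lt_succ_iff] using hi
  have h : (n ! : ℂ) = (n.choose i : ℂ) * i ! * (n - i)! := factorial_eq_choose_mul (p := (i, n - i)) (by simp; omega)
  have h0 : (n ! : ℂ) ≠ 0 := by exact_mod_cast Nat.factorial_ne_zero n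
  have h1 : (i ! : ℂ) ≠ 0 := by exact_mod_cast Nat.factorial_ne_zero i
  have h2 : ((n - i)! : ℂ) ≠ 0 := by exact_mod_cast Nat.factorial_ne_zero _
  have h3 : (n.choose i : ℂ) ≠ 0 := by exact_mod_cast (Nat.choose_pos hi').ne'
  rw [coeff_taylorPS, coeff_taylorPS, h]
  field_simp

lemma taylorPS_const (a w : ℂ) : taylorPS (fun _ ↦ a) w = PowerSeries.C a := by
  ext n
  rw [coeff_taylorPS, iteratedDeriv_const, PowerSeries.coeff_C]
  split_ifs with h
  · subst h; simp
  · simp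

lemma taylorPS_pow {f : ℂ → ℂ} {w : ℂ} (hf : AnalyticAt ℂ f w) (i : ℕ) :
    taylorPS (fun z ↦ f z ^ i) w = taylorPS f w ^ i := by
  induction i with
  | zero => simpa using taylorPS_const 1 w
  | succ i ih =>
    simp only [pow_succ]
    rw [taylorPS_mul (hf.fun_pow i) hf, ih]

lemma taylorPS_sum {ι : Type*} (s : Finset ι) {f : ι → ℂ → ℂ} {w : ℂ}
    (hf : ∀ i ∈ s, AnalyticAt ℂ (f i) w) :
    taylorPS (fun z ↦ ∑ i ∈ s, f i z) w = ∑ i ∈ s, taylorPS (f i) w := by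
  ext n
  rw [coeff_taylorPS, iteratedDeriv_fun_sum fun i hi ↦ (hf i hi).contDiffAt, map_sum,
    Finset.sum_div]
  simp only [coeff_taylorPS]

/-- The differential equation `f'' = 6f² - c` as a recursion for the Taylor coefficients. -/
lemma taylorPS_recursion {f : ℂ → ℂ} {w c : ℂ} (hf : AnalyticAt ℂ f w)
    (hode : ∀ᶠ z in 𝓝 w, deriv (deriv f) z = 6 * f z ^ 2 - c) (n : ℕ) :
    ((n + 2) * (n + 1) : ℂ) * PowerSeries.coeff (n + 2) (taylorPS f w) =
      6 * PowerSeries.coeff n (taylorPS f w * taylorPS f w) - if n = 0 then c else 0 := by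
  have h1 : deriv (deriv f) =ᶠ[𝓝 w] fun z ↦ 6 * (f z * f z) - c := by
    filter_upwards [hode] with z hz
    rw [hz]; ring
  have h2 : iteratedDeriv (n + 2) f w = iteratedDeriv n (fun z ↦ 6 * (f z * f z) - c) w := by
    rw [iteratedDeriv_succ', iteratedDeriv_succ', h1.iteratedDeriv_eq n]
  have h3 : iteratedDeriv n (fun z ↦ 6 * (f z * f z) - c) w =
      6 * iteratedDeriv n (fun z ↦ f z * f z) w - if n = 0 then c else 0 := by
    rw [iteratedDeriv_fun_sub (analyticAt_const.fun_mul (hf.fun_mul hf)).contDiffAt contDiffAt_const,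
      iteratedDeriv_const_mul_field, iteratedDeriv_const]
  have h0 : (n ! : ℂ) ≠ 0 := by exact_mod_cast Nat.factorial_ne_zero n
  have h4 : ((n + 2)! : ℂ) = (n ! : ℂ) * ((n + 2) * (n + 1)) := by
    rw [Nat.factorial_succ, Nat.factorial_succ]; push_cast; ring
  have h5 : ((n : ℂ) + 2) ≠ 0 := by exact_mod_cast (by omega : n + 2 ≠ 0)
  have h6 : ((n : ℂ) + 1) ≠ 0 := by exact_mod_cast (by omega : n + 1 ≠ 0)
  rw [← taylorPS_mul hf hf, coeff_taylorPS, coeff_taylorPS, h2, h3, h4]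
  split_ifs with h
  · subst h; simp; field_simp
  · field_simp
    ring

lemma le_order_iff_taylorPS {f : ℂ → ℂ} {w : ℂ} (hf : AnalyticAt ℂ f w) (n : ℕ) :
    (n : ℕ∞) ≤ analyticOrderAt f w ↔ ∀ i < n, PowerSeries.coeff i (taylorPS f w) = 0 := by
  rw [natCast_le_analyticOrderAt_iff_iteratedDeriv_eq_zero hf]
  refine forall₂_congr fun i _ ↦ ?_
  rw [coeff_taylorPS, div_eq_zero_iff]
  have h0 : (i ! : ℂ) ≠ 0 := by exact_mod_cast Nat.factorial_ne_zero i
  tauto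

/-- An entire function vanishing to order at least `M` at each of finitely many points is divisible
by the corresponding polynomial. -/
lemma exists_entire_quotient {G : ℂ → ℂ} (hG : Differentiable ℂ G) (M : ℕ) (s : Finset ℂ)
    (hs : ∀ w ∈ s, (M : ℕ∞) ≤ analyticOrderAt G w) :
    ∃ E : ℂ → ℂ, Differentiable ℂ E ∧ ∀ z, G z = (∏ w ∈ s, (z - w) ^ M) * E z := by
  classical
  induction s using Finset.induction_on with
  | empty => exact ⟨G, hG, by simp⟩
  | insert w s hw ih =>
    obtain ⟨E, hE, hGE⟩ := ih fun u hu ↦ hs u (Finset.mem_insert_of_mem hu)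
    obtain ⟨g, hg, hgG⟩ := (natCast_le_analyticOrderAt (hG.analyticAt w)).mp
      (hs w (Finset.mem_insert_self w s))
    have hP : (∏ u ∈ s, (w - u) ^ M) ≠ 0 := Finset.prod_ne_zero_iff.mpr fun u hu ↦
      pow_ne_zero _ (sub_ne_zero.mpr fun h ↦ hw (h ▸ hu))
    have hPa : AnalyticAt ℂ (fun z ↦ ∏ u ∈ s, (z - u) ^ M) w := by fun_prop
    have hea : AnalyticAt ℂ (fun z ↦ g z / ∏ u ∈ s, (z - u) ^ M) w := hg.div hPa hP
    have hev : ∀ᶠ z in 𝓝 w, E z = (z - w) ^ M * (g z / ∏ u ∈ s, (z - u) ^ M) := by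
      filter_upwards [hgG, hPa.continuousAt.eventually_ne hP] with z h1 h2
      rw [hGE] at h1
      field_simp
      rw [mul_comm, h1, smul_eq_mul]
    refine ⟨Function.update (fun z ↦ E z / (z - w) ^ M) w (g w / ∏ u ∈ s, (w - u) ^ M), ?_, ?_⟩
    · intro z
      by_cases hz : z = w
      · subst hz
        refine (hea.differentiableAt).congr_of_eventuallyEq ?_
        filter_upwards [hev] with u hu
        by_cases hu' : u = z
        · subst hu'; simp
        · rw [Function.update_of_ne hu', hu]
          have := pow_ne_zero M (sub_ne_zero.mpr hu')
          field_simp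
      · have hd : DifferentiableAt ℂ (fun z ↦ E z / (z - w) ^ M) z :=
          (hE z).div (by fun_prop) (pow_ne_zero _ (sub_ne_zero.mpr hz))
        refine hd.congr_of_eventuallyEq ?_
        filter_upwards [isOpen_ne.mem_nhds hz] with u hu
        rw [Function.update_of_ne hu]
    · intro z
      rw [hGE, Finset.prod_insert hw]
      by_cases hz : z = w
      · subst hz
        rw [Function.update_self, hev.self_of_nhds]
        ring
      · rw [Function.update_of_ne hz]
        have := pow_ne_zero M (sub_ne_zero.mpr hz)
        field_simp

end TaylorSeries

/-! ### Schwarz's lemma and the comparison of estimates -/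

section SchwarzLemma

open Filter Topology PeriodPair
open NumberField
open scoped Nat
open Finset.HasAntidiagonal (antidiagonal mem_antidiagonal)

lemma taylorPS_sub_self (w : ℂ) : taylorPS (fun z ↦ z - w) w = PowerSeries.X := by
  ext n
  rw [coeff_taylorPS, PowerSeries.coeff_X]
  rcases n with _ | _ | n
  · simp
  · simp
  · rw [iteratedDeriv_succ']
    have : deriv (fun z : ℂ ↦ z - w) = fun _ ↦ 1 := by ext z; simp
    rw [this, iteratedDeriv_const]
    simp

/-- Schwarz's lemma for an entire function with zeros of order `M` at many points: its `M`-th Taylor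
coefficient at one of them is small. -/
lemma norm_coeff_taylorPS_le {G : ℂ → ℂ} (hG : Differentiable ℂ G) {M : ℕ} {s : Finset ℂ}
    (hs : ∀ w ∈ s, (M : ℕ∞) ≤ analyticOrderAt G w) {W R S : ℝ} (hW1 : 1 ≤ W)
    (hW : ∀ w ∈ s, ‖w‖ ≤ W) (hR : 2 * W ≤ R) (hS : ∀ z, ‖z‖ ≤ R → ‖G z‖ ≤ S) {w₀ : ℂ}
    (hw₀ : w₀ ∈ s) :
    ‖PowerSeries.coeff M (taylorPS G w₀)‖ ≤ S * (2 / R) ^ (s.card * M) * (2 * W) ^ (s.card * M) := by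
  classical
  obtain ⟨E, hE, hGE⟩ := exists_entire_quotient hG M s hs
  have hRpos : 0 < R := by linarith
  have hS0 : 0 ≤ S := (norm_nonneg _).trans (hS 0 (by simpa using hRpos.le))
  set Q : ℂ → ℂ := fun z ↦ (∏ w ∈ s.erase w₀, (z - w) ^ M) * E z with hQ
  have hQa : AnalyticAt ℂ Q w₀ := by
    have : Differentiable ℂ Q := by fun_prop
    exact this.analyticAt w₀
  have hGQ : G = fun z ↦ (z - w₀) ^ M * Q z := by
    ext z
    rw [hGE, ← Finset.mul_prod_erase s _ hw₀, hQ]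
    ring
  have hc : PowerSeries.coeff M (taylorPS G w₀) = Q w₀ := by
    rw [hGQ, taylorPS_mul (by fun_prop) hQa, taylorPS_pow (by fun_prop), taylorPS_sub_self]
    have := PowerSeries.coeff_X_pow_mul (taylorPS Q w₀) M 0
    rw [zero_add] at this
    rw [this, coeff_taylorPS]
    simp
  have hEle : ∀ z ∈ Metric.closedBall (0 : ℂ) R, ‖E z‖ ≤ S * (2 / R) ^ (s.card * M) := by
    intro z hz
    refine Complex.norm_le_of_forall_mem_frontier_norm_le (U := Metric.ball (0 : ℂ) R)
      Metric.isBounded_ball hE.diffContOnCl ?_ (by rwa [closure_ball _ hRpos.ne'])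
    intro u hu
    rw [frontier_ball _ hRpos.ne', mem_sphere_zero_iff_norm] at hu
    have h1 := hS u hu.le
    rw [hGE, norm_mul] at h1
    have h2 : (R / 2) ^ (s.card * M) ≤ ‖∏ w ∈ s, (u - w) ^ M‖ := by
      rw [norm_prod, mul_comm _ M, pow_mul, ← Finset.prod_const]
      refine Finset.prod_le_prod (fun _ _ ↦ by positivity) fun w hw ↦ ?_
      rw [norm_pow]
      refine pow_le_pow_left₀ (by positivity) ?_ M
      have := norm_sub_norm_le u w
      have := hW w hw
      linarith
    have h3 : (R / 2) ^ (s.card * M) * ‖E u‖ ≤ S :=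
      (mul_le_mul_of_nonneg_right h2 (norm_nonneg _)).trans h1
    have h4 : (2 / R) ^ (s.card * M) = ((R / 2) ^ (s.card * M))⁻¹ := by
      rw [← inv_pow, inv_div]
    rw [h4, ← div_eq_mul_inv, le_div_iff₀ (by positivity)]
    linarith
  have hw₀W := hW w₀ hw₀
  have h5 := hEle w₀ (by rw [mem_closedBall_zero_iff]; linarith)
  rw [hc, hQ]
  simp only [norm_mul]
  rw [mul_comm]
  refine mul_le_mul h5 ?_ (norm_nonneg _) (by positivity)
  have h6 : ‖∏ w ∈ s.erase w₀, (w₀ - w) ^ M‖ ≤ (2 * W) ^ ((s.erase w₀).card * M) := by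
    rw [norm_prod, mul_comm _ M, pow_mul, ← Finset.prod_const]
    refine Finset.prod_le_prod (fun _ _ ↦ by positivity) fun w hw ↦ ?_
    rw [norm_pow]
    refine pow_le_pow_left₀ (norm_nonneg _) ?_ M
    have := norm_sub_le w₀ w
    have := hW w (Finset.mem_of_mem_erase hw)
    linarith
  refine h6.trans (pow_le_pow_right₀ (by linarith) ?_)
  exact Nat.mul_le_mul_right _ (Finset.card_le_card (Finset.erase_subset _ _))

/-- The numerical comparison of the analytic upper bound for `x` with the arithmetic lower bound
`hxy`, which bounds the order of vanishing `M`. Up to factors `exp (O(M))`, the numbers `M! x` and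
`M! y` are at most `M^{2M} R^{-mM}` and `M^{2M}`, where `R^m = M^{2δ+1}`; hence
`M^{(2δ+1)M} ≤ M^{2δM} exp (O(M))`. -/
lemma order_le_of_estimates {δ m L N M : ℕ} {c A C H W R x y : ℝ}
    (hδ : 1 ≤ δ) (hm : m = 6 * (2 * δ + 1)) (hc : 1 ≤ c) (hA : 1 ≤ A) (hC : 0 ≤ C) (hH : 1 ≤ H)
    (hW : 1 ≤ W) (hR : 1 ≤ R) (hRM : R ^ 6 = M) (hLN : L ≤ N) (hL : L ^ 2 = 2 * m * N)
    (hNM : N ≤ M) (hM : 1 ≤ M) (hx0 : 0 ≤ x) (hy0 : 0 ≤ y)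
    (hy : y ≤ (L : ℝ) ^ 2 * (c * (L : ℝ) ^ 2 * (N ! * (2 * A) ^ (3 * N)) * (2 * A) ^ (2 * L + M)))
    (hx : x ≤ H ^ (2 * L) * ((L : ℝ) ^ 2 * (c * (L : ℝ) ^ 2 * (N ! * (2 * A) ^ (3 * N))) *
      Real.exp (16 * C * (L * R ^ 3)) * (2 / R) ^ (m * M) * (2 * W) ^ (m * M)))
    (hxy : 1 ≤ (M ! * x) * (M ! * y) ^ (δ - 1)) :
    (M : ℝ) ≤ (H ^ 2 * (4 * m * (c * (4 * m) * (2 * A) ^ 3) * Real.exp (32 * C * m) *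
      (4 * W) ^ m)) * (4 * m * (c * (4 * m) * (2 * A) ^ 3) * (2 * A) ^ 3) ^ (δ - 1) := by
  have hm1 : (1 : ℝ) ≤ m := by exact_mod_cast (by omega : 1 ≤ m)
  have hM1 : (1 : ℝ) ≤ M := by exact_mod_cast hM
  have hMM : ((M ! : ℕ) : ℝ) ≤ (M : ℝ) ^ M := by exact_mod_cast Nat.factorial_le_pow M
  have hNM' : ((N ! : ℕ) : ℝ) ≤ (M : ℝ) ^ M :=
    le_trans (by exact_mod_cast Nat.factorial_le hNM) hMM
  have h2M : (M : ℝ) ≤ 2 ^ M := by exact_mod_cast Nat.lt_two_pow_self.le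
  have hL2 : (L : ℝ) ^ 2 ≤ 2 * m * M := by
    have : L ^ 2 ≤ 2 * m * M := hL ▸ Nat.mul_le_mul_left _ hNM
    exact_mod_cast this
  have hL2' : (L : ℝ) ^ 2 ≤ (4 * m : ℝ) ^ M := by
    refine hL2.trans ?_
    have h1 : (2 * m : ℝ) ≤ (2 * m) ^ M := le_self_pow₀ (by linarith) (by omega)
    have h2 : (4 * m : ℝ) ^ M = (2 * m) ^ M * 2 ^ M := by rw [← mul_pow]; ring
    rw [h2]
    exact mul_le_mul h1 h2M (by positivity) (by positivity)
  have hcM : c ≤ c ^ M := le_self_pow₀ hc (by omega)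
  have h2A : (1 : ℝ) ≤ 2 * A := by linarith
  have hA3 : (2 * A) ^ (3 * N) ≤ ((2 * A) ^ 3) ^ M := by
    rw [← pow_mul]; exact pow_le_pow_right₀ h2A (by omega)
  have hA4 : (2 * A) ^ (2 * L + M) ≤ ((2 * A) ^ 3) ^ M := by
    rw [← pow_mul]; exact pow_le_pow_right₀ h2A (by omega)
  have hB : c * (L : ℝ) ^ 2 * (N ! * (2 * A) ^ (3 * N)) ≤
      ((c * (4 * m) * (2 * A) ^ 3) * M) ^ M := by
    have : ((c * (4 * m) * (2 * A) ^ 3) * M) ^ M =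
        c ^ M * (4 * m) ^ M * (M ^ M * ((2 * A) ^ 3) ^ M) := by
      rw [mul_pow, mul_pow, mul_pow]; ring
    rw [this]
    gcongr
  have hy' : M ! * y ≤ ((4 * m * (c * (4 * m) * (2 * A) ^ 3) * (2 * A) ^ 3) * (M : ℝ) ^ 2) ^ M := by
    have : ((4 * m * (c * (4 * m) * (2 * A) ^ 3) * (2 * A) ^ 3) * (M : ℝ) ^ 2) ^ M =
        M ^ M * ((4 * m) ^ M * (((c * (4 * m) * (2 * A) ^ 3) * M) ^ M * ((2 * A) ^ 3) ^ M)) := by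
      simp only [← mul_pow]; ring
    rw [this]
    refine mul_le_mul hMM (hy.trans ?_) hy0 (by positivity)
    gcongr
  have hLR : L * R ^ 3 ≤ 2 * m * M := by
    refine le_of_pow_le_pow_left₀ two_ne_zero (by positivity) ?_
    have : (L * R ^ 3) ^ 2 = (L : ℝ) ^ 2 * M := by rw [← hRM]; ring
    rw [this]
    nlinarith [mul_le_mul_of_nonneg_right hL2 (by linarith : (0 : ℝ) ≤ M),
      mul_pos (by linarith : (0 : ℝ) < m) (by linarith : (0 : ℝ) < M)]
  have hexp : Real.exp (16 * C * (L * R ^ 3)) ≤ Real.exp (32 * C * m) ^ M := by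
    rw [← Real.exp_nat_mul]
    apply Real.exp_le_exp.mpr
    calc 16 * C * (L * R ^ 3) ≤ 16 * C * (2 * m * M) := by gcongr
      _ = M * (32 * C * m) := by ring
  have hHL : H ^ (2 * L) ≤ (H ^ 2) ^ M := by
    rw [← pow_mul]; exact pow_le_pow_right₀ hH (by omega)
  have hR0 : 0 < R := by linarith
  have hx' : M ! * x * (R ^ m) ^ M ≤ ((H ^ 2 * (4 * m * (c * (4 * m) * (2 * A) ^ 3) *
      Real.exp (32 * C * m) * (4 * W) ^ m)) * (M : ℝ) ^ 2) ^ M := by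
    have e1 : ((H ^ 2 * (4 * m * (c * (4 * m) * (2 * A) ^ 3) *
      Real.exp (32 * C * m) * (4 * W) ^ m)) * (M : ℝ) ^ 2) ^ M =
        (M : ℝ) ^ M * ((H ^ 2) ^ M * ((4 * m) ^ M * (((c * (4 * m) * (2 * A) ^ 3) * M) ^ M) *
          Real.exp (32 * C * m) ^ M * ((4 * W) ^ m) ^ M)) := by
      simp only [← mul_pow]; ring
    have e2 : (2 / R) ^ (m * M) * (2 * W) ^ (m * M) * (R ^ m) ^ M = ((4 * W) ^ m) ^ M := by
      rw [← pow_mul, ← pow_mul, ← mul_pow, ← mul_pow]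
      congr 1
      field_simp
      ring
    rw [e1, mul_assoc]
    refine mul_le_mul hMM ?_ (by positivity) (by positivity)
    refine (mul_le_mul_of_nonneg_right hx (by positivity)).trans ?_
    rw [← e2]
    calc _ = H ^ (2 * L) * ((L : ℝ) ^ 2 * (c * (L : ℝ) ^ 2 * (N ! * (2 * A) ^ (3 * N))) *
      Real.exp (16 * C * (L * R ^ 3)) * ((2 / R) ^ (m * M) * (2 * W) ^ (m * M) * (R ^ m) ^ M)) := by
          ring
      _ ≤ _ := by gcongr
  set K₁ := H ^ 2 * (4 * m * (c * (4 * m) * (2 * A) ^ 3) * Real.exp (32 * C * m) *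
      (4 * W) ^ m) with hK₁
  set K₂ := 4 * m * (c * (4 * m) * (2 * A) ^ 3) * (2 * A) ^ 3 with hK₂
  have hK₁0 : 0 < K₁ := by rw [hK₁]; positivity
  have hK₂0 : 0 < K₂ := by rw [hK₂]; positivity
  have hRm : R ^ m = (M : ℝ) ^ (2 * δ + 1) := by rw [hm, pow_mul, hRM]
  have hfin : ((M : ℝ) ^ (2 * δ + 1)) ^ M ≤ (K₁ * K₂ ^ (δ - 1) * (M : ℝ) ^ (2 * δ)) ^ M := by
    rw [← hRm]
    calc (R ^ m) ^ M = 1 * (R ^ m) ^ M := (one_mul _).symm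
      _ ≤ (M ! * x) * (M ! * y) ^ (δ - 1) * (R ^ m) ^ M := by gcongr
      _ = (M ! * x * (R ^ m) ^ M) * (M ! * y) ^ (δ - 1) := by ring
      _ ≤ (K₁ * (M : ℝ) ^ 2) ^ M * ((K₂ * (M : ℝ) ^ 2) ^ M) ^ (δ - 1) := by gcongr
      _ = (K₁ * K₂ ^ (δ - 1) * ((M : ℝ) ^ 2 * ((M : ℝ) ^ 2) ^ (δ - 1))) ^ M := by
          rw [← pow_mul, mul_comm M, pow_mul, ← mul_pow, mul_pow K₂]; ring
      _ = _ := by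
          rw [← pow_succ', Nat.sub_add_cancel hδ, ← pow_mul]
  have h := le_of_pow_le_pow_left₀ (by omega) (by positivity) hfin
  rw [pow_succ', mul_comm, mul_comm _ ((M : ℝ) ^ (2 * δ))] at h
  exact le_of_mul_le_mul_left h (by positivity)

end SchwarzLemma

/-! ### Schneider's method -/

section SchneiderMethod

open Filter Topology PeriodPair
open NumberField
open scoped Nat
open Finset.HasAntidiagonal (antidiagonal mem_antidiagonal)

variable {K : Type} [Field K]

/-- The homogenised auxiliary function `∑ ι(αᵢⱼ) H₁ⁱ H₂ʲ h^{2n-i-j}`; it is `h²ⁿ ∑ ι(αᵢⱼ) f₁ⁱ f₂ʲ`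
wherever `Hᵢ = h fᵢ`. -/
def auxFun {n : ℕ} (ι : K →+* ℂ) (α : Fin n → Fin n → 𝓞 K) (h H₁ H₂ : ℂ → ℂ) (z : ℂ) : ℂ :=
  ∑ i, ∑ j, ι (α i j) * (H₁ z ^ (i : ℕ) * H₂ z ^ (j : ℕ) * h z ^ (2 * n - i - j))

lemma auxFun_eq {n : ℕ} (ι : K →+* ℂ) (α : Fin n → Fin n → 𝓞 K) {h H₁ H₂ : ℂ → ℂ} {z f₁ f₂ : ℂ}
    (h₁ : H₁ z = h z * f₁) (h₂ : H₂ z = h z * f₂) :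
    auxFun ι α h H₁ H₂ z =
      h z ^ (2 * n) * ∑ i, ∑ j, ι (α i j) * (f₁ ^ (i : ℕ) * f₂ ^ (j : ℕ)) := by
  rw [auxFun, Finset.mul_sum]
  refine Finset.sum_congr rfl fun i _ ↦ ?_
  rw [Finset.mul_sum]
  refine Finset.sum_congr rfl fun j _ ↦ ?_
  have : h z ^ (2 * n) = h z ^ (i : ℕ) * h z ^ (j : ℕ) * h z ^ (2 * n - i - j) := by
    rw [← pow_add, ← pow_add]
    congr 1
    omega
  rw [this, h₁, h₂, mul_pow, mul_pow]
  ring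

lemma taylorPS_auxFun {n : ℕ} (ι : K →+* ℂ) (α : Fin n → Fin n → 𝓞 K) {h H₁ H₂ f₁ f₂ : ℂ → ℂ}
    {w : ℂ} {F G : PowerSeries K} (hh : AnalyticAt ℂ h w)
    (hf₁ : AnalyticAt ℂ f₁ w) (hf₂ : AnalyticAt ℂ f₂ w)
    (h₁ : ∀ᶠ z in 𝓝 w, H₁ z = h z * f₁ z) (h₂ : ∀ᶠ z in 𝓝 w, H₂ z = h z * f₂ z)
    (hF : PowerSeries.map ι F = taylorPS f₁ w) (hG : PowerSeries.map ι G = taylorPS f₂ w) :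
    taylorPS (auxFun ι α h H₁ H₂) w =
      taylorPS h w ^ (2 * n) * PowerSeries.map ι (combPS α F G) := by
  have hev : auxFun ι α h H₁ H₂ =ᶠ[𝓝 w] fun z ↦
      h z ^ (2 * n) * ∑ i, ∑ j, ι (α i j) * (f₁ z ^ (i : ℕ) * f₂ z ^ (j : ℕ)) := by
    filter_upwards [h₁, h₂] with z e₁ e₂
    exact auxFun_eq ι α e₁ e₂
  have ha : ∀ i j : Fin n, AnalyticAt ℂ (fun z ↦ f₁ z ^ (i : ℕ) * f₂ z ^ (j : ℕ)) w :=
    fun i j ↦ (hf₁.fun_pow _).fun_mul (hf₂.fun_pow _)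
  have hb : ∀ i j : Fin n, AnalyticAt ℂ
      (fun z ↦ ι (α i j) * (f₁ z ^ (i : ℕ) * f₂ z ^ (j : ℕ))) w :=
    fun i j ↦ analyticAt_const.fun_mul (ha i j)
  have hc : ∀ i : Fin n, AnalyticAt ℂ
      (fun z ↦ ∑ j, ι (α i j) * (f₁ z ^ (i : ℕ) * f₂ z ^ (j : ℕ))) w :=
    fun i ↦ Finset.univ.analyticAt_fun_sum fun j _ ↦ hb i j
  rw [taylorPS_congr hev, taylorPS_mul (hh.fun_pow _)
    (Finset.univ.analyticAt_fun_sum fun i _ ↦ hc i), taylorPS_pow hh,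
    taylorPS_sum _ fun i _ ↦ hc i]
  congr 1
  rw [combPS, map_sum]
  refine Finset.sum_congr rfl fun i _ ↦ ?_
  rw [map_sum, taylorPS_sum _ fun j _ ↦ hb i j]
  refine Finset.sum_congr rfl fun j _ ↦ ?_
  rw [taylorPS_mul analyticAt_const (ha i j), taylorPS_mul (hf₁.fun_pow _) (hf₂.fun_pow _),
    taylorPS_pow hf₁, taylorPS_pow hf₂, taylorPS_const, map_mul, map_mul, map_pow, map_pow, hF, hG,
    PowerSeries.map_C]

lemma norm_auxFun_le [NumberField K] {n : ℕ} (ι : K →+* ℂ) {α : Fin n → Fin n → 𝓞 K} {h H₁ H₂ : ℂ → ℂ} {z : ℂ}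
    {B D : ℝ} (hD : 1 ≤ D) (hh : ‖h z‖ ≤ D) (h₁ : ‖H₁ z‖ ≤ D) (h₂ : ‖H₂ z‖ ≤ D)
    (hB : ∀ i j, house (α i j : K) ≤ B) :
    ‖auxFun ι α h H₁ H₂ z‖ ≤ (n : ℝ) ^ 2 * B * D ^ (2 * n) := by
  have hterm : ∀ i j : Fin n, ‖ι (α i j) * (H₁ z ^ (i : ℕ) * H₂ z ^ (j : ℕ) *
      h z ^ (2 * n - i - j))‖ ≤ B * D ^ (2 * n) := by
    intro i j
    have e : D ^ (2 * n) = D ^ (i : ℕ) * D ^ (j : ℕ) * D ^ (2 * n - i - j) := by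
      rw [← pow_add, ← pow_add]
      congr 1
      omega
    have hB0 : 0 ≤ B := (house_nonneg _).trans (hB i j)
    rw [e, norm_mul, norm_mul, norm_mul, norm_pow, norm_pow, norm_pow]
    have := (norm_embedding_le_house (α i j : K) ι).trans (hB i j)
    gcongr
  rw [auxFun]
  refine (norm_sum_le _ _).trans ?_
  have : ∀ i ∈ Finset.univ, ‖∑ j, ι (α i j) * (H₁ z ^ (i : ℕ) * H₂ z ^ (j : ℕ) *
      h z ^ (2 * n - i - j))‖ ≤ n * (B * D ^ (2 * n)) := by
    intro i _
    refine (norm_sum_le _ _).trans ?_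
    refine (Finset.sum_le_sum fun j _ ↦ hterm i j).trans_eq (by simp)
  refine (Finset.sum_le_sum this).trans_eq ?_
  simp
  ring

lemma differentiable_auxFun {n : ℕ} (ι : K →+* ℂ) (α : Fin n → Fin n → 𝓞 K) {h H₁ H₂ : ℂ → ℂ}
    (hh : Differentiable ℂ h) (h₁ : Differentiable ℂ H₁) (h₂ : Differentiable ℂ H₂) :
    Differentiable ℂ (auxFun ι α h H₁ H₂) := by
  unfold auxFun
  fun_prop

/-- Two meromorphic functions `f₁ = H₁/h`, `f₂ = H₂/h` of finite order, satisfying differential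
equations `f'' = 6f² - γ` over a number field and taking algebraic integral values together with
their first derivatives at sufficiently many points, are algebraically dependent.

The auxiliary function of degree `< L = 2mt` in `f₁` and `f₂` vanishes to order `N = 2mt²` at each of
the `m` points. If it did not vanish identically, its exact order `M ≥ N` at these points would be
bounded independently of `t`. -/
theorem schneiderLang [NumberField K] (ι : K →+* ℂ) {m : ℕ} (hm : m = 6 * (2 * Module.finrank ℚ K + 1))
    {h H₁ H₂ f₁ f₂ : ℂ → ℂ} (hh : FinOrder h) (hH₁ : FinOrder H₁) (hH₂ : FinOrder H₂)
    {w : Fin m → ℂ} (hw : Function.Injective w) (hw0 : ∀ k, h (w k) ≠ 0)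
    (hf₁ : ∀ k, AnalyticAt ℂ f₁ (w k)) (hf₂ : ∀ k, AnalyticAt ℂ f₂ (w k))
    (he₁ : ∀ k, ∀ᶠ z in 𝓝 (w k), H₁ z = h z * f₁ z)
    (he₂ : ∀ k, ∀ᶠ z in 𝓝 (w k), H₂ z = h z * f₂ z) {γ₁ γ₂ : 𝓞 K}
    (ho₁ : ∀ k, ∀ᶠ z in 𝓝 (w k), deriv (deriv f₁) z = 6 * f₁ z ^ 2 - ι γ₁)
    (ho₂ : ∀ k, ∀ᶠ z in 𝓝 (w k), deriv (deriv f₂) z = 6 * f₂ z ^ 2 - ι γ₂)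
    {x₁ y₁ x₂ y₂ : Fin m → 𝓞 K} (hx₁ : ∀ k, f₁ (w k) = ι (x₁ k))
    (hy₁ : ∀ k, deriv f₁ (w k) = ι (y₁ k)) (hx₂ : ∀ k, f₂ (w k) = ι (x₂ k))
    (hy₂ : ∀ k, deriv f₂ (w k) = ι (y₂ k)) :
    ∃ (n : ℕ) (α : Fin n → Fin n → 𝓞 K), α ≠ 0 ∧ ∀ z, auxFun ι α h H₁ H₂ z = 0 := by
  classical
  set δ := Module.finrank ℚ K with hδ
  have hδ1 : 1 ≤ δ := Module.finrank_pos
  have hm0 : 0 < m := by omega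
  have hF := fun k ↦ exists_intPS ι (taylorPS f₁ (w k)) γ₁ (x₁ k) (y₁ k)
    (by simp [coeff_taylorPS, hx₁]) (by simp [coeff_taylorPS, hy₁])
    (taylorPS_recursion (hf₁ k) (ho₁ k))
  have hG := fun k ↦ exists_intPS ι (taylorPS f₂ (w k)) γ₂ (x₂ k) (y₂ k)
    (by simp [coeff_taylorPS, hx₂]) (by simp [coeff_taylorPS, hy₂])
    (taylorPS_recursion (hf₂ k) (ho₂ k))
  choose F hFT hFI A₁ hA₁ hFA using hF
  choose G hGT hGI A₂ hA₂ hGA using hG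
  obtain ⟨A, hA, hFA', hGA'⟩ : ∃ A : ℝ, 1 ≤ A ∧ (∀ k, GeoPS A (F k)) ∧ (∀ k, GeoPS A (G k)) := by
    have s₁ : 0 ≤ ∑ k, A₁ k := Finset.sum_nonneg fun k _ ↦ hA₁ k
    have s₂ : 0 ≤ ∑ k, A₂ k := Finset.sum_nonneg fun k _ ↦ hA₂ k
    refine ⟨1 + ∑ k, A₁ k + ∑ k, A₂ k, by linarith, fun k ↦ (hFA k).mono (hA₁ k) ?_,
      fun k ↦ (hGA k).mono (hA₂ k) ?_⟩
    · have := Finset.single_le_sum (fun k _ ↦ hA₁ k) (Finset.mem_univ k)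
      linarith
    · have := Finset.single_le_sum (fun k _ ↦ hA₂ k) (Finset.mem_univ k)
      linarith
  obtain ⟨W, hW, hwW⟩ : ∃ W : ℝ, 1 ≤ W ∧ ∀ k, ‖w k‖ ≤ W := by
    have s₁ : 0 ≤ ∑ k, ‖w k‖ := Finset.sum_nonneg fun k _ ↦ norm_nonneg _
    refine ⟨1 + ∑ k, ‖w k‖, by linarith, fun k ↦ ?_⟩
    have := Finset.single_le_sum (fun k _ ↦ norm_nonneg (w k)) (Finset.mem_univ k)
    linarith
  obtain ⟨H, hH, hwH⟩ : ∃ H : ℝ, 1 ≤ H ∧ ∀ k, ‖h (w k)‖⁻¹ ≤ H := by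
    have s₁ : 0 ≤ ∑ k, ‖h (w k)‖⁻¹ := Finset.sum_nonneg fun k _ ↦ by positivity
    refine ⟨1 + ∑ k, ‖h (w k)‖⁻¹, by linarith, fun k ↦ ?_⟩
    have := Finset.single_le_sum (f := fun k ↦ ‖h (w k)‖⁻¹) (fun k _ ↦ by positivity)
      (Finset.mem_univ k)
    linarith
  obtain ⟨C, hC, hCh, hC₁, hC₂⟩ : ∃ C : ℝ, 0 ≤ C ∧
      (∀ z, ‖h z‖ ≤ Real.exp (C * (1 + ‖z‖) ^ 3)) ∧
      (∀ z, ‖H₁ z‖ ≤ Real.exp (C * (1 + ‖z‖) ^ 3)) ∧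
      (∀ z, ‖H₂ z‖ ≤ Real.exp (C * (1 + ‖z‖) ^ 3)) := by
    obtain ⟨-, c₀, hc₀, hb₀⟩ := hh
    obtain ⟨-, c₁, hc₁, hb₁⟩ := hH₁
    obtain ⟨-, c₂, hc₂, hb₂⟩ := hH₂
    refine ⟨c₀ + c₁ + c₂, by positivity, fun z ↦ (hb₀ z).trans ?_, fun z ↦ (hb₁ z).trans ?_,
      fun z ↦ (hb₂ z).trans ?_⟩ <;>
    · gcongr
      linarith
  obtain ⟨c, hc, hsiegel⟩ := exists_combPS K
  -- the bound for the order of vanishing provided by `order_le_of_estimates`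
  set Q : ℝ := (H ^ 2 * (4 * m * (c * (4 * m) * (2 * A) ^ 3) * Real.exp (32 * C * m) *
      (4 * W) ^ m)) * (4 * m * (c * (4 * m) * (2 * A) ^ 3) * (2 * A) ^ 3) ^ (δ - 1) with hQ
  obtain ⟨t, ht⟩ := exists_nat_gt (max Q ((2 * W) ^ 6))
  have ht0 : 0 < t := by
    have h1 : (0 : ℝ) < (2 * W) ^ 6 := by positivity
    have h2 : (0 : ℝ) < t := h1.trans ((le_max_right _ _).trans_lt ht)
    exact_mod_cast h2
  have hs := hsiegel m t hm0 ht0 A hA F G hFI hGI hFA' hGA'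
  obtain ⟨L, hL⟩ : ∃ L, L = 2 * m * t := ⟨_, rfl⟩
  obtain ⟨N, hN⟩ : ∃ N, N = 2 * m * t ^ 2 := ⟨_, rfl⟩
  rw [← hL, ← hN] at hs
  obtain ⟨α, hα, hvan, hαB⟩ := hs
  refine ⟨_, α, hα, ?_⟩
  by_contra hne
  push Not at hne
  obtain ⟨z₀, hz₀⟩ := hne
  set Φ := auxFun ι α h H₁ H₂ with hΦ
  have hΦd : Differentiable ℂ Φ := differentiable_auxFun ι α hh.1 hH₁.1 hH₂.1
  have hT : ∀ k, taylorPS Φ (w k) =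
      taylorPS h (w k) ^ (2 * L) * PowerSeries.map ι (combPS α (F k) (G k)) := fun k ↦
    taylorPS_auxFun ι α (hh.1.analyticAt _) (hf₁ k) (hf₂ k) (he₁ k) (he₂ k) (hFT k) (hGT k)
  -- `M` is the least order of vanishing of `Φ` at the points `w k`
  have hex : ∃ n, ∃ k, PowerSeries.coeff n (combPS α (F k) (G k)) ≠ 0 := by
    by_contra! hall
    apply hz₀
    have h0 : taylorPS Φ (w ⟨0, hm0⟩) = 0 := by
      have : combPS α (F ⟨0, hm0⟩) (G ⟨0, hm0⟩) = 0 := by ext n; simp [hall]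
      rw [hT, this]; simp
    have h1 : analyticOrderAt Φ (w ⟨0, hm0⟩) = ⊤ := by
      rw [ENat.eq_top_iff_forall_ge]
      intro n
      rw [le_order_iff_taylorPS (hΦd.analyticAt _)]
      intro i _
      rw [h0]; simp
    have h2 := analyticOrderAt_eq_top.mp h1
    have h3 : AnalyticOnNhd ℂ Φ Set.univ := fun z _ ↦ hΦd.analyticAt z
    exact h3.eqOn_zero_of_preconnected_of_eventuallyEq_zero isPreconnected_univ
      (Set.mem_univ _) h2 (Set.mem_univ z₀)
  set M := Nat.find hex with hM
  obtain ⟨k₀, hk₀⟩ := Nat.find_spec hex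
  rw [← hM] at hk₀
  have hlow : ∀ k, ∀ n < M, PowerSeries.coeff n (combPS α (F k) (G k)) = 0 := by
    intro k n hn
    by_contra hcon
    exact Nat.find_min hex hn ⟨k, hcon⟩
  have hNM : N ≤ M := by
    by_contra! hlt
    exact hk₀ (hvan k₀ M hlt)
  have htN : t ≤ N := by
    rw [hN]
    exact (Nat.le_self_pow two_ne_zero t).trans (Nat.le_mul_of_pos_left _ (by omega))
  have htM : (t : ℝ) ≤ M := by exact_mod_cast htN.trans hNM
  have hM1 : 1 ≤ M := by omega
  have hMT : ∀ k, ∃ Z : PowerSeries ℂ, PowerSeries.map ι (combPS α (F k) (G k)) =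
      PowerSeries.X ^ M * Z := by
    intro k
    refine PowerSeries.X_pow_dvd_iff.mpr fun n hn ↦ ?_
    rw [PowerSeries.coeff_map, hlow k n hn, map_zero]
  have hord : ∀ k, (M : ℕ∞) ≤ analyticOrderAt Φ (w k) := by
    intro k
    rw [le_order_iff_taylorPS (hΦd.analyticAt _)]
    obtain ⟨Z, hZ⟩ := hMT k
    refine PowerSeries.X_pow_dvd_iff.mp ⟨taylorPS h (w k) ^ (2 * L) * Z, ?_⟩
    rw [hT, hZ]; ring
  set x : K := PowerSeries.coeff M (combPS α (F k₀) (G k₀)) with hx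
  have hlead : PowerSeries.coeff M (taylorPS Φ (w k₀)) = h (w k₀) ^ (2 * L) * ι x := by
    obtain ⟨Z, hZ⟩ := hMT k₀
    have e1 : ι x = PowerSeries.coeff 0 Z := by
      rw [hx, ← PowerSeries.coeff_map, hZ]
      simpa using PowerSeries.coeff_X_pow_mul Z M 0
    have e2 : taylorPS Φ (w k₀) = PowerSeries.X ^ M * (taylorPS h (w k₀) ^ (2 * L) * Z) := by
      rw [hT, hZ]; ring
    have e3 := PowerSeries.coeff_X_pow_mul (taylorPS h (w k₀) ^ (2 * L) * Z) M 0
    rw [zero_add] at e3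
    rw [e2, e3, e1]
    simp only [PowerSeries.coeff_zero_eq_constantCoeff_apply, map_mul, map_pow]
    rw [← PowerSeries.coeff_zero_eq_constantCoeff_apply, coeff_taylorPS]
    simp
  -- the radius `R = M^{1/6}` balances the growth of `Φ` against its zeros
  set R : ℝ := (M : ℝ) ^ ((6 : ℕ) : ℝ)⁻¹ with hR
  have hRM : R ^ 6 = M := Real.rpow_inv_natCast_pow (by positivity) (by norm_num)
  have hR0 : 0 ≤ R := by positivity
  have hRW : 2 * W ≤ R := by
    refine le_of_pow_le_pow_left₀ (n := 6) (by norm_num) hR0 ?_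
    rw [hRM]
    exact ((le_max_right _ _).trans ht.le).trans htM
  have hR1 : 1 ≤ R := by linarith
  set B : ℝ := c * (L : ℝ) ^ 2 * (N ! * (2 * A) ^ (3 * N)) with hB
  have hαB' : ∀ i j, house (α i j : K) ≤ B := by
    intro i j
    have := hαB i j
    rwa [show 6 * m * t ^ 2 = 3 * N by rw [hN]; ring] at this
  have hB0 : 0 ≤ B := by positivity
  set D : ℝ := Real.exp (8 * C * R ^ 3) with hD
  have hD1 : 1 ≤ D := Real.one_le_exp (by positivity)
  have hgrow : ∀ z : ℂ, ‖z‖ ≤ R → ‖Φ z‖ ≤ (L : ℝ) ^ 2 * B * D ^ (2 * L) := by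
    intro z hz
    have hle : Real.exp (C * (1 + ‖z‖) ^ 3) ≤ D := by
      apply Real.exp_le_exp.mpr
      have : (1 + ‖z‖) ^ 3 ≤ (2 * R) ^ 3 := by
        gcongr; linarith
      calc C * (1 + ‖z‖) ^ 3 ≤ C * (2 * R) ^ 3 := by gcongr
        _ = _ := by ring
    exact norm_auxFun_le ι hD1 ((hCh z).trans hle) ((hC₁ z).trans hle) ((hC₂ z).trans hle) hαB'
  have hDL : D ^ (2 * L) = Real.exp (16 * C * (L * R ^ 3)) := by
    rw [hD, ← Real.exp_nat_mul]
    congr 1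
    push_cast
    ring
  have hcard : (Finset.univ.image w).card = m := by
    rw [Finset.card_image_of_injective _ hw]; simp
  have hschwarz := norm_coeff_taylorPS_le hΦd (M := M) (s := Finset.univ.image w)
    (by simpa using hord) hW (by simpa using hwW) hRW hgrow
    (w₀ := w k₀) (Finset.mem_image_of_mem _ (Finset.mem_univ _))
  rw [hcard, hlead, hDL, norm_mul, norm_pow] at hschwarz
  have hxle : ‖ι x‖ ≤ H ^ (2 * L) * ((L : ℝ) ^ 2 * B * Real.exp (16 * C * (L * R ^ 3)) *
      (2 / R) ^ (m * M) * (2 * W) ^ (m * M)) := by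
    have hp : 0 < ‖h (w k₀)‖ := norm_pos_iff.mpr (hw0 k₀)
    have e : ‖ι x‖ = (‖h (w k₀)‖⁻¹) ^ (2 * L) * (‖h (w k₀)‖ ^ (2 * L) * ‖ι x‖) := by
      rw [← mul_assoc, ← mul_pow, inv_mul_cancel₀ hp.ne', one_pow, one_mul]
    rw [e]
    exact mul_le_mul (pow_le_pow_left₀ (by positivity) (hwH k₀) _) hschwarz (by positivity)
      (by positivity)
  have hγint : IsIntegral ℤ ((M ! : K) * x) := IntPS.combPS α (hFI k₀) (hGI k₀) M
  have hγ0 : (M ! : K) * x ≠ 0 :=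
    mul_ne_zero (by exact_mod_cast Nat.factorial_ne_zero M) hk₀
  have hsize := one_le_norm_mul_house_pow ι hγint hγ0
  rw [map_mul, map_natCast, norm_mul, Complex.norm_natCast, house_nat_mul] at hsize
  have hhouse := house_coeff_combPS_le hA (hFA' k₀) (hGA' k₀) hαB' M
  have hLN : L ≤ N := by
    rw [hL, hN]; exact Nat.mul_le_mul le_rfl (Nat.le_self_pow two_ne_zero t)
  have hfinal := order_le_of_estimates hδ1 hm hc hA hC hH hW hR1 hRM hLN
    (by rw [hL, hN]; ring) hNM hM1 (norm_nonneg _) (house_nonneg _) hhouse hxle hsize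
  have : (M : ℝ) < M := hfinal.trans_lt (((le_max_left _ _).trans_lt ht).trans_le htM)
  exact lt_irrefl _ this

end SchneiderMethod

/-! ### Values of `℘` at the points `2ᵏu` -/

section Values

open Filter Topology PeriodPair
open NumberField
open scoped Nat
open Finset.HasAntidiagonal (antidiagonal mem_antidiagonal)

variable (L : PeriodPair)

lemma isAlgebraic_P' (hg2 : IsAlgebraic ℚ L.g₂) (hg3 : IsAlgebraic ℚ L.g₃) {z : ℂ}
    (hz : z ∉ L.lattice) (h : IsAlgebraic ℚ (℘[L] z)) : IsAlgebraic ℚ (℘'[L] z) := by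
  refine IsAlgebraic.of_pow two_pos ?_
  rw [L.derivWeierstrassP_sq z hz]
  have h4 : IsAlgebraic ℚ (4 : ℂ) := isAlgebraic_natCast 4
  exact ((h4.mul (h.pow 3)).sub (hg2.mul h)).sub hg3

lemma isAlgebraic_P_half (hg2 : IsAlgebraic ℚ L.g₂) (hg3 : IsAlgebraic ℚ L.g₃) :
    IsAlgebraic ℚ (℘[L] (L.ω₁ / 2)) := by
  have h0 : ℘'[L] (L.ω₁ / 2) = 0 := P'_half_period L (by
    rw [mul_div_cancel₀ _ two_ne_zero]; exact L.ω₁_mem_lattice)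
  have h1 := L.derivWeierstrassP_sq _ L.ω₁_div_two_notMem_lattice
  rw [h0] at h1
  set x := ℘[L] (L.ω₁ / 2)
  have m2 : L.g₂ ∈ algebraicClosure ℚ ℂ := mem_algebraicClosure_iff.mpr hg2
  have m3 : L.g₃ ∈ algebraicClosure ℚ ℂ := mem_algebraicClosure_iff.mpr hg3
  have : IsAlgebraic (algebraicClosure ℚ ℂ) x := by
    refine ⟨4 * Polynomial.X ^ 3 - Polynomial.C ⟨_, m2⟩ * Polynomial.X - Polynomial.C ⟨_, m3⟩,
      ?_, ?_⟩
    · intro h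
      have := congrArg (fun q ↦ Polynomial.coeff q 3) h
      simp at this
    · simp only [map_sub, map_mul, Polynomial.aeval_X, Polynomial.aeval_C, map_pow, map_ofNat]
      exact (by linear_combination -h1 : 4 * x ^ 3 - L.g₂ * x - L.g₃ = 0)
  have hK : Algebra.IsAlgebraic ℚ (algebraicClosure ℚ ℂ) := algebraicClosure.isAlgebraic ℚ ℂ
  exact this.restrictScalars ℚ

/-- The points `2ᵏu` for large `k`, after a suitable translation by a half period if they lie in
the lattice, are points at which `℘` and `℘'` take values in a fixed number field. -/
lemma exists_shift (hg2 : IsAlgebraic ℚ L.g₂) (hg3 : IsAlgebraic ℚ L.g₃) {u : ℂ}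
    (hu : u ∈ L.lattice ∨ IsAlgebraic ℚ (℘[L] u)) :
    ∃ (a : ℂ) (k₀ : ℕ) (v v' : ℂ), IsAlgebraic ℚ v ∧ IsAlgebraic ℚ v' ∧
      ∀ K : IntermediateField ℚ ℂ, L.g₂ ∈ K → v ∈ K → v' ∈ K → ∀ k, k₀ ≤ k →
        2 ^ k * u + a ∉ L.lattice ∧ ℘[L] (2 ^ k * u + a) ∈ K ∧ ℘'[L] (2 ^ k * u + a) ∈ K := by
  by_cases hex : ∃ k₀ : ℕ, 2 ^ k₀ * u ∈ L.lattice
  · obtain ⟨k₀, hk₀⟩ := hex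
    refine ⟨L.ω₁ / 2, k₀, ℘[L] (L.ω₁ / 2), 0, isAlgebraic_P_half L hg2 hg3, isAlgebraic_zero,
      fun K _ hv _ k hk ↦ ?_⟩
    have hmem : 2 ^ k * u ∈ L.lattice := by
      have := L.lattice.smul_mem ((2 : ℤ) ^ (k - k₀)) hk₀
      rw [zsmul_eq_mul, ← mul_assoc] at this
      push_cast at this
      rwa [← pow_add, Nat.sub_add_cancel hk] at this
    have h1 := L.weierstrassP_add_coe (L.ω₁ / 2) ⟨_, hmem⟩
    have h2 := L.derivWeierstrassP_add_coe (L.ω₁ / 2) ⟨_, hmem⟩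
    have h0 : ℘'[L] (L.ω₁ / 2) = 0 := P'_half_period L (by
      rw [mul_div_cancel₀ _ two_ne_zero]; exact L.ω₁_mem_lattice)
    rw [add_comm] at h1 h2
    refine ⟨fun h ↦ L.ω₁_div_two_notMem_lattice ((L.lattice.add_mem_iff_right hmem).mp h), ?_, ?_⟩
    · rw [h1]; exact hv
    · rw [h2, h0]; exact zero_mem K
  · push Not at hex
    have hu0 : u ∉ L.lattice := by simpa using hex 0
    have hu1 := hu.resolve_left hu0
    refine ⟨0, 0, ℘[L] u, ℘'[L] u, hu1, isAlgebraic_P' L hg2 hg3 hu0 hu1,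
      fun K hK hv hv' k _ ↦ ?_⟩
    simp only [add_zero]
    refine ⟨hex k, ?_⟩
    induction k with
    | zero => simpa using ⟨hv, hv'⟩
    | succ k ih =>
      have e : (2 : ℂ) ^ (k + 1) * u = 2 * (2 ^ k * u) := by ring
      rw [e]
      exact double_mem L K hK (hex k) (e ▸ hex (k + 1)) (ih (Nat.zero_le _)).1
        (ih (Nat.zero_le _)).2

/-- The function `μ²℘(μz + a)` satisfies `f'' = 6f² - μ⁴g₂/2`. -/
lemma deriv_scaled {μ a z : ℂ} (hz : μ * z + a ∉ L.lattice) :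
    deriv (fun u ↦ μ ^ 2 * ℘[L] (μ * u + a)) z = μ ^ 3 * ℘'[L] (μ * z + a) ∧
    deriv (deriv fun u ↦ μ ^ 2 * ℘[L] (μ * u + a)) z =
      6 * (μ ^ 2 * ℘[L] (μ * z + a)) ^ 2 - μ ^ 4 * (L.g₂ / 2) := by
  have haff : ∀ u, HasDerivAt (fun u ↦ μ * u + a) μ u := fun u ↦ by
    simpa using ((hasDerivAt_id u).const_mul μ).add_const a
  have h1 : ∀ u, μ * u + a ∉ L.lattice →
      deriv (fun u ↦ μ ^ 2 * ℘[L] (μ * u + a)) u = μ ^ 3 * ℘'[L] (μ * u + a) := by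
    intro u hu
    have := (((hasDerivAt_P L hu).comp u (haff u)).const_mul (μ ^ 2)).deriv
    rw [show μ ^ 3 * ℘'[L] (μ * u + a) = μ ^ 2 * (℘'[L] (μ * u + a) * μ) by ring, ← this]
    rfl
  refine ⟨h1 z hz, ?_⟩
  have h2 : deriv (fun u ↦ μ ^ 2 * ℘[L] (μ * u + a)) =ᶠ[𝓝 z]
      fun u ↦ μ ^ 3 * ℘'[L] (μ * u + a) := by
    filter_upwards [eventually_affine_notMem L hz] with u hu
    exact h1 u hu
  rw [h2.deriv_eq]
  have := (((hasDerivAt_P' L hz).comp z (haff z)).const_mul (μ ^ 3)).deriv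
  rw [show 6 * (μ ^ 2 * ℘[L] (μ * z + a)) ^ 2 - μ ^ 4 * (L.g₂ / 2) =
    μ ^ 3 * ((6 * ℘[L] (μ * z + a) ^ 2 - L.g₂ / 2) * μ) by ring, ← this]
  rfl

lemma exists_integer_eq {K : Type*} [Field K] [NumberField K] (ι : K →+* ℂ) {d : ℤ} {x : K}
    (e : ℕ) (hx : IsIntegral ℤ (d • x)) : ∃ y : 𝓞 K, ι y = (d : ℂ) ^ (e + 1) * ι x := by
  rw [zsmul_eq_mul] at hx
  have hdi : IsIntegral ℤ (d : K) := by
    simpa using (isIntegral_algebraMap (R := ℤ) (A := K) (x := d))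
  refine ⟨⟨(d : K) ^ e * (d * x), (hdi.pow e).mul hx⟩, ?_⟩
  change ι ((d : K) ^ e * (d * x)) = _
  rw [map_mul, map_mul, map_pow, map_intCast]
  ring

/-- If `α` and the invariants are algebraic and each of `u`, `αu` is a lattice point or a point at
which `℘` is algebraic, where `u ≠ 0`, then `α` lies in the field of endomorphisms. -/
theorem mem_endQ_of_isAlgebraic (hg2 : IsAlgebraic ℚ L.g₂) (hg3 : IsAlgebraic ℚ L.g₃)
    {u α : ℂ} (hu0 : u ≠ 0) (hα : IsAlgebraic ℚ α)
    (hu : u ∈ L.lattice ∨ IsAlgebraic ℚ (℘[L] u))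
    (hαu : α * u ∈ L.lattice ∨ IsAlgebraic ℚ (℘[L] (α * u))) : α ∈ endQ L.ω₁ L.ω₂ := by
  classical
  by_cases hα0 : α = 0
  · refine ⟨1, one_ne_zero, fun w _ ↦ ⟨0, 0, by simp [hα0]⟩⟩
  obtain ⟨a, k₁, v₁, v₁', hv₁, hv₁', hK₁⟩ := exists_shift L hg2 hg3 hu
  obtain ⟨b, k₂, v₂, v₂', hv₂, hv₂', hK₂⟩ := exists_shift L hg2 hg3 hαu
  -- the number field over which everything is defined
  let S : Set ℂ := {α, L.g₂, v₁, v₁', v₂, v₂'}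
  let K : IntermediateField ℚ ℂ := IntermediateField.adjoin ℚ S
  have hSK : S ⊆ K := IntermediateField.subset_adjoin ℚ S
  have hfd : FiniteDimensional ℚ K := by
    have : Finite S := Set.toFinite S
    refine IntermediateField.finiteDimensional_adjoin fun x hx ↦ IsAlgebraic.isIntegral ?_
    rcases hx with rfl | rfl | rfl | rfl | rfl | rfl <;> assumption
  have hnf : NumberField K := ⟨⟩
  have hαK : α ∈ K := hSK (by simp [S])
  have hgK : L.g₂ ∈ K := hSK (by simp [S])
  have hP₁ := hK₁ K hgK (hSK (by simp [S])) (hSK (by simp [S]))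
  have hP₂ := hK₂ K hgK (hSK (by simp [S])) (hSK (by simp [S]))
  set m := 6 * (2 * Module.finrank ℚ K + 1) with hm
  -- `m` is the number of points needed in `schneiderLang`, and `2 ^ q k * u` is the `k`-th of them
  let q : Fin m → ℕ := fun k ↦ k₁ + k₂ + k
  have hq₁ : ∀ k, k₁ ≤ q k := fun k ↦ by simp only [q]; omega
  have hq₂ : ∀ k, k₂ ≤ q k := fun k ↦ by simp only [q]; omega
  let αK : K := ⟨α, hαK⟩
  let gK : K := ⟨L.g₂, hgK⟩
  let X₁ : Fin m → K := fun k ↦ ⟨_, (hP₁ (q k) (hq₁ k)).2.1⟩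
  let Y₁ : Fin m → K := fun k ↦ ⟨_, (hP₁ (q k) (hq₁ k)).2.2⟩
  let X₂ : Fin m → K := fun k ↦ ⟨_, (hP₂ (q k) (hq₂ k)).2.1⟩
  let Y₂ : Fin m → K := fun k ↦ ⟨_, (hP₂ (q k) (hq₂ k)).2.2⟩
  -- a common denominator `d`; replacing `z` by `dz` makes all values and derivatives integral,
  -- since `d²℘(dz + a)` and its derivative `d³℘'(dz + a)` solve the equation with `d⁴g₂`
  obtain ⟨d, hd0, hd⟩ := exists_integral_multiples ℤ ℚ (L := K)
    ({gK / 2, αK ^ 4 * (gK / 2)} ∪ Finset.univ.image X₁ ∪ Finset.univ.image Y₁ ∪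
      Finset.univ.image (fun k ↦ αK ^ 2 * X₂ k) ∪ Finset.univ.image (fun k ↦ αK ^ 3 * Y₂ k))
  have hdC : (d : ℂ) ≠ 0 := by exact_mod_cast hd0
  let ι : K →+* ℂ := algebraMap K ℂ
  obtain ⟨γ₁, hγ₁⟩ := exists_integer_eq ι 3 (hd (gK / 2) (by simp))
  obtain ⟨γ₂, hγ₂⟩ := exists_integer_eq ι 3 (hd (αK ^ 4 * (gK / 2)) (by simp))
  choose x₁ hx₁ using fun k ↦ exists_integer_eq ι 1 (hd (X₁ k) (by simp))
  choose y₁ hy₁ using fun k ↦ exists_integer_eq ι 2 (hd (Y₁ k) (by simp))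
  choose x₂ hx₂ using fun k ↦ exists_integer_eq ι 1 (hd (αK ^ 2 * X₂ k)
    (Finset.mem_union_left _
      (Finset.mem_union_right _ (Finset.mem_image_of_mem _ (Finset.mem_univ k)))))
  choose y₂ hy₂ using fun k ↦ exists_integer_eq ι 2 (hd (αK ^ 3 * Y₂ k)
    (Finset.mem_union_right _ (Finset.mem_image_of_mem _ (Finset.mem_univ k))))
  have hα' : ι αK = α := rfl
  have hg' : ι gK = L.g₂ := rfl
  have hX₁ : ∀ k, ι (X₁ k) = ℘[L] (2 ^ q k * u + a) := fun _ ↦ rfl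
  have hY₁ : ∀ k, ι (Y₁ k) = ℘'[L] (2 ^ q k * u + a) := fun _ ↦ rfl
  have hX₂ : ∀ k, ι (X₂ k) = ℘[L] (2 ^ q k * (α * u) + b) := fun _ ↦ rfl
  have hY₂ : ∀ k, ι (Y₂ k) = ℘'[L] (2 ^ q k * (α * u) + b) := fun _ ↦ rfl
  simp only [map_mul, map_pow, map_div₀, map_ofNat, hα', hg'] at hγ₁ hγ₂
  simp only [map_mul, map_pow, hα', hX₁, hY₁, hX₂, hY₂] at hx₁ hy₁ hx₂ hy₂
  let w : Fin m → ℂ := fun k ↦ 2 ^ q k * u / d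
  have hw : Function.Injective w := by
    intro i j hij
    have h1 : (2 : ℂ) ^ q i = 2 ^ q j := by
      have : 2 ^ q i * u / d = 2 ^ q j * u / d := hij
      field_simp at this
      exact this
    have h2 : q i = q j := Nat.pow_right_injective le_rfl (by exact_mod_cast h1)
    ext
    simp only [q] at h2
    omega
  have hw₁ : ∀ k, (d : ℂ) * w k + a = 2 ^ q k * u + a := fun k ↦ by
    simp only [w]; field_simp
  have hw₂ : ∀ k, α * d * w k + b = 2 ^ q k * (α * u) + b := fun k ↦ by
    simp only [w]; field_simp
  have hn₁ : ∀ k, (d : ℂ) * w k + a ∉ L.lattice := fun k ↦ by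
    rw [hw₁]; exact (hP₁ (q k) (hq₁ k)).1
  have hn₂ : ∀ k, α * d * w k + b ∉ L.lattice := fun k ↦ by
    rw [hw₂]; exact (hP₂ (q k) (hq₂ k)).1
  let σ := wSigma L.ω₁ L.ω₂
  let s₁ : ℂ → ℂ := fun z ↦ σ (d * z + a) * σ (d * z + a)
  let s₂ : ℂ → ℂ := fun z ↦ σ (α * d * z + b) * σ (α * d * z + b)
  let H₁ : ℂ → ℂ := fun z ↦ (d : ℂ) ^ 2 * (sigmaNum L (d * z + a) * s₂ z)
  let H₂ : ℂ → ℂ := fun z ↦ (α * d) ^ 2 * (sigmaNum L (α * d * z + b) * s₁ z)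
  let f₁ : ℂ → ℂ := fun z ↦ (d : ℂ) ^ 2 * ℘[L] (d * z + a)
  let f₂ : ℂ → ℂ := fun z ↦ (α * d) ^ 2 * ℘[L] (α * d * z + b)
  have hσ := finOrder_wSigma L
  have hs₁ : FinOrder s₁ := (hσ.comp_affine _ _).mul (hσ.comp_affine _ _)
  have hs₂ : FinOrder s₂ := (hσ.comp_affine _ _).mul (hσ.comp_affine _ _)
  have hH₁ : FinOrder H₁ := (((finOrder_sigmaNum L).comp_affine _ _).mul hs₂).const_mul _
  have hH₂ : FinOrder H₂ := (((finOrder_sigmaNum L).comp_affine _ _).mul hs₁).const_mul _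
  have hs₁0 : ∀ z, (d : ℂ) * z + a ∉ L.lattice → s₁ z ≠ 0 := fun z hz ↦
    mul_ne_zero (wSigma_ne_zero L hz) (wSigma_ne_zero L hz)
  have hs₂0 : ∀ z, α * d * z + b ∉ L.lattice → s₂ z ≠ 0 := fun z hz ↦
    mul_ne_zero (wSigma_ne_zero L hz) (wSigma_ne_zero L hz)
  have he₁ : ∀ z, (d : ℂ) * z + a ∉ L.lattice → H₁ z = s₁ z * s₂ z * f₁ z := fun z hz ↦ by
    simp only [H₁, s₁, f₁, σ, sigmaNum_eq L hz]; ring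
  have he₂ : ∀ z, α * d * z + b ∉ L.lattice → H₂ z = s₁ z * s₂ z * f₂ z := fun z hz ↦ by
    simp only [H₂, s₂, f₂, σ, sigmaNum_eq L hz]; ring
  obtain ⟨n, β, hβ, hrel⟩ := schneiderLang ι hm (hs₁.mul hs₂) hH₁ hH₂ (f₁ := f₁) (f₂ := f₂)
    hw (fun k ↦ mul_ne_zero (hs₁0 _ (hn₁ k)) (hs₂0 _ (hn₂ k)))
    (fun k ↦ analyticAt_const.fun_mul (analyticAt_P_affine L (hn₁ k)))
    (fun k ↦ analyticAt_const.fun_mul (analyticAt_P_affine L (hn₂ k)))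
    (fun k ↦ (eventually_affine_notMem L (hn₁ k)).mono he₁)
    (fun k ↦ (eventually_affine_notMem L (hn₂ k)).mono he₂)
    (γ₁ := γ₁) (γ₂ := γ₂)
    (fun k ↦ (eventually_affine_notMem L (hn₁ k)).mono fun z hz ↦ by
      rw [hγ₁]; exact (deriv_scaled L hz).2)
    (fun k ↦ (eventually_affine_notMem L (hn₂ k)).mono fun z hz ↦ by
      rw [hγ₂, ← mul_assoc, ← mul_pow, mul_comm (d : ℂ)]; exact (deriv_scaled L hz).2)
    (x₁ := x₁) (y₁ := y₁) (x₂ := x₂) (y₂ := y₂)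
    (fun k ↦ by simp only [f₁, hw₁, hx₁])
    (fun k ↦ by rw [(deriv_scaled L (hn₁ k)).1, hw₁, hy₁])
    (fun k ↦ by simp only [f₂, hw₂, hx₂]; ring)
    (fun k ↦ by rw [(deriv_scaled L (hn₂ k)).1, hw₂, hy₂]; ring)
  have hμ₂ : α * d ≠ 0 := mul_ne_zero hα0 hdC
  refine mem_endQ_of_relation L (μ := d) (a := a) (b := b) hdC hα0 (n := n)
    (c := fun i j ↦ ι (β i j) * ((d : ℂ) ^ 2) ^ (i : ℕ) * ((α * d) ^ 2) ^ (j : ℕ)) ?_ ?_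
  · intro hc
    apply hβ
    ext i j
    have h1 : ι (β i j) * ((d : ℂ) ^ 2) ^ (i : ℕ) * ((α * d) ^ 2) ^ (j : ℕ) = 0 :=
      congrFun (congrFun hc i) j
    have h2 : ι (β i j) = 0 := by
      rcases mul_eq_zero.mp h1 with h | h
      · exact (mul_eq_zero.mp h).resolve_right (by positivity)
      · exact absurd h (pow_ne_zero _ (pow_ne_zero _ hμ₂))
    have h3 : (β i j : K) = 0 := ι.injective (by rw [h2, map_zero])
    simpa using h3
  · intro z h1 h2
    have h3 := hrel z
    rw [auxFun_eq ι β (he₁ z h1) (he₂ z h2)] at h3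
    have h4 := (mul_eq_zero.mp h3).resolve_left
      (pow_ne_zero _ (mul_ne_zero (hs₁0 z h1) (hs₂0 z h2)))
    rw [← h4]
    refine Finset.sum_congr rfl fun i _ ↦ Finset.sum_congr rfl fun j _ ↦ ?_
    simp only [f₁, f₂]
    ring

end Values

/-! ### Transcendence of `℘(αp)` -/

/-- If `Ω` is a lattice in `ℂ` with field of endomorphisms `k`, `p ∈ ℂ ∖ Ω` is such that
`g₂`, `g₃`, `℘(p)` are algebraic over `ℚ`, and `α` is an algebraic number with `α ∉ k`,
then `αp ∉ Ω` and `℘(αp)` is transcendental over `ℚ`. -/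
theorem wP_alpha_transcendental (ω₁ ω₂ : ℂ) (hΩ : IsLatticeBasis ω₁ ω₂)
    (p : ℂ) (hp : p ∉ LatticePts ω₁ ω₂)
    (hg2 : IsAlgebraic ℚ (g2 ω₁ ω₂)) (hg3 : IsAlgebraic ℚ (g3 ω₁ ω₂))
    (hP : IsAlgebraic ℚ (wP ω₁ ω₂ p))
    (α : ℂ) (hαalg : IsAlgebraic ℚ α) (hα : α ∉ endQ ω₁ ω₂) :
    α * p ∉ LatticePts ω₁ ω₂ ∧ Transcendental ℚ (wP ω₁ ω₂ (α * p)) := by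
  let L : PeriodPair := ⟨ω₁, ω₂, hΩ⟩
  change p ∉ LatticePts L.ω₁ L.ω₂ at hp
  change IsAlgebraic ℚ (g2 L.ω₁ L.ω₂) at hg2
  change IsAlgebraic ℚ (g3 L.ω₁ L.ω₂) at hg3
  change IsAlgebraic ℚ (wP L.ω₁ L.ω₂ p) at hP
  change α ∉ endQ L.ω₁ L.ω₂ at hα
  change α * p ∉ LatticePts L.ω₁ L.ω₂ ∧ Transcendental ℚ (wP L.ω₁ L.ω₂ (α * p))
  rw [mem_latticePts_iff] at hp ⊢
  rw [g2_eq] at hg2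
  rw [g3_eq] at hg3
  rw [wP_eq L hp] at hP
  have hp0 : p ≠ 0 := by
    rintro rfl
    exact hp (zero_mem _)
  have key := fun h ↦ hα (mem_endQ_of_isAlgebraic L hg2 hg3 hp0 hαalg (Or.inr hP) h)
  have hn : α * p ∉ L.lattice := fun h ↦ key (Or.inl h)
  refine ⟨hn, fun h ↦ key (Or.inr ?_)⟩
  rwa [wP_eq L hn] at h
end
end

section
/- Let Ω be a lattice in ℂ with Weierstrass functions σ and ℘. For all integers n, m with n ≠ 0 and m > 0, one has the multiplication formula ℘(nz/m) = ℘(z) − (f″_{n,m}(z) f_{n,m}(z) − f′_{n,m}(z)²) / (n² f_{n,m}(z)²) for all z ∈ ℂ at which both sides are defined, where f_{n,m}(z) = σ(nz/m)^{m²} / σ(z)^{n²} and f′_{n,m}, f″_{n,m} denote its first and second complex derivatives. -/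
/-!
The formula is the second logarithmic derivative of `f = σ(nz/m)^{m²} / σ(z)^{n²}`. Where
`σ(z)` and `σ(nz/m)` do not vanish, `f'/f = mn ζ(nz/m) - n² ζ(z)` (`logDeriv_wf`); differentiating
once more gives `(f''f - f'²)/f² = n² ℘(z) - n² ℘(nz/m)`.

The analytic input is that `σ` is entire (`differentiable_wSigma`) and vanishes only on the lattice
(`wSigma_ne_zero`). Both follow from the cubic estimate for the Weierstrass elementary factor,
`(1 - u) exp (u + u²/2) = 1 + O(u³)` (`norm_elementaryFactor_sub_one_le`), and from the convergence
of `∑ ‖ω‖⁻³` over the nonzero lattice points, which make the product converge locally uniformly.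
-/

open Complex

noncomputable section

/-- The function `f_{n,m}(z) = σ(nz/m)^{m²} / σ(z)^{n²}`. -/
def wf (ω₁ ω₂ : ℂ) (n m : ℤ) (z : ℂ) : ℂ :=
  wSigma ω₁ ω₂ ((n : ℂ) * z / (m : ℂ)) ^ (m ^ 2 : ℤ) / wSigma ω₁ ω₂ z ^ (n ^ 2 : ℤ)

/-- The cubic estimate for the Weierstrass elementary factor of genus two: its exponent is the
degree-two Taylor polynomial of `-log (1 - u)`. -/
lemma norm_elementaryFactor_sub_one_le {u : ℂ} (hu : ‖u‖ ≤ 1 / 2) :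
    ‖(1 - u) * Complex.exp (u + u ^ 2 / 2) - 1‖ ≤ 10 * ‖u‖ ^ 3 := by
  set t := u + u ^ 2 / 2 with ht
  have h0 := norm_nonneg u
  have htu : ‖t‖ ≤ 5 / 4 * ‖u‖ := by
    calc ‖t‖ ≤ ‖u‖ + ‖u ^ 2 / 2‖ := norm_add_le _ _
      _ = ‖u‖ + ‖u‖ ^ 2 / 2 := by simp
      _ ≤ 5 / 4 * ‖u‖ := by nlinarith
  have hr : ‖Complex.exp t - (1 + t + t ^ 2 / 2)‖ ≤ ‖t‖ ^ 3 := by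
    have := Complex.exp_bound (x := t) (by linarith) (n := 3) (by norm_num)
    simp only [Finset.sum_range_succ, Finset.sum_range_zero, Nat.factorial] at this
    norm_num at this
    refine this.trans ?_
    nlinarith [pow_nonneg (norm_nonneg t) 3]
  have ht3 : ‖t‖ ^ 3 ≤ 2 * ‖u‖ ^ 3 := by
    calc ‖t‖ ^ 3 ≤ (5 / 4 * ‖u‖) ^ 3 := by gcongr
      _ ≤ 2 * ‖u‖ ^ 3 := by nlinarith [pow_nonneg h0 3]
  -- The quadratic Taylor polynomial of `exp t` cancels `1 - u` up to order three in `u`.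
  have key : (1 - u) * Complex.exp t - 1 = (1 - u) * (Complex.exp t - (1 + t + t ^ 2 / 2)) +
      u ^ 3 * (-(1 / 2) - 3 / 8 * u - 1 / 8 * u ^ 2) := by
    rw [ht]; ring
  have h1u : ‖1 - u‖ ≤ 2 := by
    calc ‖1 - u‖ ≤ ‖(1 : ℂ)‖ + ‖u‖ := norm_sub_le _ _
      _ ≤ 2 := by rw [norm_one]; linarith
  have hp : ‖-(1 / 2) - 3 / 8 * u - 1 / 8 * u ^ 2‖ ≤ 1 := by
    calc ‖-(1 / 2) - 3 / 8 * u - 1 / 8 * u ^ 2‖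
        ≤ ‖(-(1 / 2) : ℂ)‖ + ‖3 / 8 * u‖ + ‖1 / 8 * u ^ 2‖ :=
          (norm_sub_le _ _).trans (by gcongr; exact norm_sub_le _ _)
      _ = 1 / 2 + 3 / 8 * ‖u‖ + 1 / 8 * ‖u‖ ^ 2 := by simp
      _ ≤ 1 := by nlinarith
  rw [key]
  calc _ ≤ ‖1 - u‖ * ‖Complex.exp t - (1 + t + t ^ 2 / 2)‖ +
        ‖u‖ ^ 3 * ‖-(1 / 2) - 3 / 8 * u - 1 / 8 * u ^ 2‖ := by
        refine (norm_add_le _ _).trans ?_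
        rw [norm_mul, norm_mul, norm_pow]
    _ ≤ 2 * (2 * ‖u‖ ^ 3) + ‖u‖ ^ 3 * 1 := by gcongr; exact hr.trans ht3
    _ ≤ 10 * ‖u‖ ^ 3 := by nlinarith [pow_nonneg h0 3]

lemma summable_inv_norm_latticePts' {ω₁ ω₂ : ℂ} (hΩ : IsLatticeBasis ω₁ ω₂) :
    Summable fun w : LatticePts' ω₁ ω₂ ↦ ‖(w : ℂ)‖⁻¹ ^ 3 := by
  obtain ⟨L, rfl, rfl⟩ : ∃ L : PeriodPair, L.ω₁ = ω₁ ∧ L.ω₂ = ω₂ := ⟨⟨ω₁, ω₂, hΩ⟩, rfl, rfl⟩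
  have h := ZLattice.summable_norm_pow_inv L.lattice 3 (by simp)
  have hmem (w : LatticePts' L.ω₁ L.ω₂) : (w : ℂ) ∈ L.lattice := by
    obtain ⟨m, n, h⟩ := w.2.1
    exact PeriodPair.mem_lattice.mpr ⟨m, n, h.symm⟩
  have he : Function.Injective fun w : LatticePts' L.ω₁ L.ω₂ ↦ (⟨w, hmem w⟩ : L.lattice) :=
    fun a b hab ↦ Subtype.ext (Subtype.mk.inj hab)
  have hs : Summable fun l : L.lattice ↦ ‖(l : ℂ)‖⁻¹ ^ 3 := h
  have hc := hs.comp_injective he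
  simpa only [Function.comp_def] using hc

/-- The deviation from `1` of the factor of `σ` indexed by the lattice point `w`. -/
def sigmaTerm (w z : ℂ) : ℂ :=
  (1 - z / w) * Complex.exp (z / w + z ^ 2 / (2 * w ^ 2)) - 1

lemma differentiable_sigmaTerm (w : ℂ) : Differentiable ℂ (sigmaTerm w) := by
  unfold sigmaTerm
  simp only [div_eq_mul_inv]
  fun_prop

/-- Locally uniform domination of the factors of `σ`. Only the finitely many lattice points with
`‖w‖ ≤ 2R` are excluded, where `‖z / w‖ ≤ 1 / 2`, required by the cubic estimate, may fail. -/
lemma eventually_norm_sigmaTerm_le {ω₁ ω₂ : ℂ} (hΩ : IsLatticeBasis ω₁ ω₂) {R : ℝ} (hR : 0 < R) :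
    ∀ᶠ w : LatticePts' ω₁ ω₂ in Filter.cofinite, ∀ z ∈ Metric.ball (0 : ℂ) R,
      ‖sigmaTerm w z‖ ≤ 10 * R ^ 3 * ‖(w : ℂ)‖⁻¹ ^ 3 := by
  have hev := (summable_inv_norm_latticePts' hΩ).tendsto_cofinite_zero.eventually_lt_const
    (show 0 < (2 * R)⁻¹ ^ 3 by positivity)
  filter_upwards [hev] with w hw z hz
  have hw' : ‖(w : ℂ)‖⁻¹ < (2 * R)⁻¹ := lt_of_pow_lt_pow_left₀ 3 (by positivity) hw
  have hz' : ‖z‖ < R := by simpa using hz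
  have hzw : ‖z / w‖ ≤ R * ‖(w : ℂ)‖⁻¹ := by
    rw [norm_div, div_eq_mul_inv]; gcongr
  have hhalf : ‖z / w‖ ≤ 1 / 2 := by
    calc ‖z / w‖ ≤ R * (2 * R)⁻¹ := hzw.trans (by gcongr)
      _ = 1 / 2 := by field_simp
  have heq : sigmaTerm w z = (1 - z / w) * Complex.exp (z / w + (z / w) ^ 2 / 2) - 1 := by
    rw [sigmaTerm, div_pow, div_div, mul_comm (2 : ℂ)]
  rw [heq]
  calc _ ≤ 10 * ‖z / w‖ ^ 3 := norm_elementaryFactor_sub_one_le hhalf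
    _ ≤ 10 * (R * ‖(w : ℂ)‖⁻¹) ^ 3 := by gcongr
    _ = _ := by ring

lemma wSigma_eq_s8 (ω₁ ω₂ z : ℂ) :
    wSigma ω₁ ω₂ z = z * ∏' w : LatticePts' ω₁ ω₂, (1 + sigmaTerm w z) := by
  simp [wSigma, sigmaTerm]

lemma differentiable_wSigma_s8 {ω₁ ω₂ : ℂ} (hΩ : IsLatticeBasis ω₁ ω₂) :
    Differentiable ℂ (wSigma ω₁ ω₂) := by
  intro z
  have hR : 0 < ‖z‖ + 1 := by positivity
  have hprod := Summable.hasProdLocallyUniformlyOn_one_add (K := Metric.ball (0 : ℂ) (‖z‖ + 1))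
    (f := fun w : LatticePts' ω₁ ω₂ ↦ sigmaTerm w) Metric.isOpen_ball
    ((summable_inv_norm_latticePts' hΩ).mul_left (10 * (‖z‖ + 1) ^ 3))
    (eventually_norm_sigmaTerm_le hΩ hR) (fun w ↦ (differentiable_sigmaTerm w).continuous.continuousOn)
  have hd := TendstoLocallyUniformlyOn.differentiableOn hprod
    (.of_forall fun s ↦ by
      refine DifferentiableOn.fun_finsetProd fun w _ ↦ ?_
      exact ((differentiable_sigmaTerm w).const_add 1).differentiableOn) Metric.isOpen_ball
  have hdz := hd.differentiableAt (Metric.isOpen_ball.mem_nhds (by simp : z ∈ _))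
  rw [funext (wSigma_eq_s8 ω₁ ω₂)]
  exact differentiableAt_id.mul hdz

lemma wSigma_ne_zero_s8 {ω₁ ω₂ : ℂ} (hΩ : IsLatticeBasis ω₁ ω₂) {z : ℂ}
    (hz : z ∉ LatticePts ω₁ ω₂) : wSigma ω₁ ω₂ z ≠ 0 := by
  rw [wSigma_eq_s8]
  have hz0 : z ≠ 0 := by
    rintro rfl
    exact hz ⟨0, 0, by simp⟩
  refine mul_ne_zero hz0 (tprod_one_add_ne_zero_of_summable (fun w ↦ ?_) ?_)
  · rw [sigmaTerm, add_sub_cancel]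
    refine mul_ne_zero (fun h ↦ hz ?_) (Complex.exp_ne_zero _)
    rw [sub_eq_zero, eq_comm, div_eq_one_iff_eq w.2.2] at h
    exact h ▸ w.2.1
  · have hR : 0 < ‖z‖ + 1 := by positivity
    refine Summable.of_norm_bounded_eventually
      ((summable_inv_norm_latticePts' hΩ).mul_left (10 * (‖z‖ + 1) ^ 3)) ?_
    filter_upwards [eventually_norm_sigmaTerm_le hΩ hR] with w hw
    simpa using hw z (by simp)

/-- The logarithmic derivative of `f_{n,m}`; the chain rule contributes the factor `n/m`, which
turns the exponent `m²` into `mn`. -/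
lemma logDeriv_wf {ω₁ ω₂ : ℂ} (hΩ : IsLatticeBasis ω₁ ω₂) {n m : ℤ} (hm : m ≠ 0) {z : ℂ}
    (hz : wSigma ω₁ ω₂ z ≠ 0) (hz' : wSigma ω₁ ω₂ ((n : ℂ) * z / m) ≠ 0) :
    logDeriv (wf ω₁ ω₂ n m) z =
      m * n * wZeta ω₁ ω₂ ((n : ℂ) * z / m) - (n : ℂ) ^ 2 * wZeta ω₁ ω₂ z := by
  have hσ := differentiable_wSigma_s8 hΩ
  have hm' : (m : ℂ) ≠ 0 := by exact_mod_cast hm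
  have hlin : HasDerivAt (fun w : ℂ ↦ (n : ℂ) * w / m) ((n : ℂ) / m) z := by
    simpa using ((hasDerivAt_id z).const_mul (n : ℂ)).div_const (m : ℂ)
  have hcomp : logDeriv (fun w ↦ wSigma ω₁ ω₂ ((n : ℂ) * w / m)) z =
      wZeta ω₁ ω₂ ((n : ℂ) * z / m) * (n / m) := by
    have := logDeriv_comp (f := wSigma ω₁ ω₂) (g := fun w : ℂ ↦ (n : ℂ) * w / m) (x := z)
      (hσ _) hlin.differentiableAt
    rw [hlin.deriv] at this
    exact this
  have hdc : DifferentiableAt ℂ (fun w ↦ wSigma ω₁ ω₂ ((n : ℂ) * w / m)) z :=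
    (hσ _).comp z hlin.differentiableAt
  change logDeriv (fun w ↦ wSigma ω₁ ω₂ ((n : ℂ) * w / (m : ℂ)) ^ (m ^ 2 : ℤ) /
    wSigma ω₁ ω₂ w ^ (n ^ 2 : ℤ)) z = _
  rw [logDeriv_div (f := fun w ↦ wSigma ω₁ ω₂ ((n : ℂ) * w / (m : ℂ)) ^ (m ^ 2 : ℤ))
    (g := fun w ↦ wSigma ω₁ ω₂ w ^ (n ^ 2 : ℤ)) z (zpow_ne_zero _ hz') (zpow_ne_zero _ hz)
    (hdc.zpow (.inl hz')) ((hσ z).zpow (.inl hz)),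
    logDeriv_fun_zpow hdc, logDeriv_fun_zpow (hσ z), hcomp]
  change _ - _ * wZeta ω₁ ω₂ z = _
  push_cast
  field_simp

/-- **Multiplication formula for `℘`.** For integers `n ≠ 0`, `m > 0` and every `z` at which
both sides are defined (`z ∉ Ω` and `nz/m ∉ Ω`),
`℘(nz/m) = ℘(z) − (f″_{n,m}(z) f_{n,m}(z) − f′_{n,m}(z)²)/(n² f_{n,m}(z)²)`. -/
theorem wP_mul_formula (ω₁ ω₂ : ℂ) (hΩ : IsLatticeBasis ω₁ ω₂)
    (n m : ℤ) (hn : n ≠ 0) (hm : 0 < m) (z : ℂ)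
    (hz : z ∉ LatticePts ω₁ ω₂) (hz' : (n : ℂ) * z / (m : ℂ) ∉ LatticePts ω₁ ω₂) :
    wP ω₁ ω₂ ((n : ℂ) * z / (m : ℂ)) =
      wP ω₁ ω₂ z -
        (deriv (deriv (wf ω₁ ω₂ n m)) z * wf ω₁ ω₂ n m z - (deriv (wf ω₁ ω₂ n m) z) ^ 2) /
          ((n : ℂ) ^ 2 * (wf ω₁ ω₂ n m z) ^ 2) := by
  have hσ := differentiable_wSigma_s8 hΩ
  have hs := wSigma_ne_zero_s8 hΩ hz
  have hs' := wSigma_ne_zero_s8 hΩ hz'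
  have hn' : (n : ℂ) ≠ 0 := by exact_mod_cast hn
  have hm' : (m : ℂ) ≠ 0 := by exact_mod_cast hm.ne'
  have hlin : Differentiable ℂ fun w : ℂ ↦ (n : ℂ) * w / m := by fun_prop
  have hlin' : HasDerivAt (fun w : ℂ ↦ (n : ℂ) * w / m) ((n : ℂ) / m) z := by
    simpa using ((hasDerivAt_id z).const_mul (n : ℂ)).div_const (m : ℂ)
  have hev : ∀ᶠ w in nhds z, wSigma ω₁ ω₂ w ≠ 0 := hσ.continuous.continuousAt.eventually_ne hs
  have hev' : ∀ᶠ w in nhds z, wSigma ω₁ ω₂ ((n : ℂ) * w / m) ≠ 0 :=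
    (hσ.comp hlin).continuous.continuousAt.eventually_ne hs'
  have hζ : ∀ w, wSigma ω₁ ω₂ w ≠ 0 → HasDerivAt (wZeta ω₁ ω₂) (-wP ω₁ ω₂ w) w := fun w hw ↦ by
    have : DifferentiableAt ℂ (wZeta ω₁ ω₂) w := (hσ.deriv w).div (hσ w) hw
    simpa [wP] using this.hasDerivAt
  have hright : HasDerivAt (fun w ↦ (m : ℂ) * n * wZeta ω₁ ω₂ ((n : ℂ) * w / m) -
      (n : ℂ) ^ 2 * wZeta ω₁ ω₂ w)
      ((m : ℂ) * n * (-wP ω₁ ω₂ ((n : ℂ) * z / m) * (n / m)) - (n : ℂ) ^ 2 * -wP ω₁ ω₂ z) z :=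
    (((hζ _ hs').comp z hlin').const_mul _).sub ((hζ z hs).const_mul _)
  have hf0 : wf ω₁ ω₂ n m z ≠ 0 := div_ne_zero (zpow_ne_zero _ hs') (zpow_ne_zero _ hs)
  have hfd : ∀ᶠ w in nhds z, DifferentiableAt ℂ (wf ω₁ ω₂ n m) w := by
    filter_upwards [hev, hev'] with w hw hw'
    have hc : DifferentiableAt ℂ (fun w ↦ wSigma ω₁ ω₂ ((n : ℂ) * w / m)) w := (hσ.comp hlin) w
    exact (hc.zpow (.inl hw')).div ((hσ w).zpow (.inl hw)) (zpow_ne_zero _ hw)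
  have hfa : AnalyticAt ℂ (wf ω₁ ω₂ n m) z :=
    Complex.analyticAt_iff_eventually_differentiableAt.mpr hfd
  -- By the quotient rule this derivative is `(f''f - f'²)/f²`.
  have hleft := hfa.deriv.differentiableAt.hasDerivAt.div hfa.differentiableAt.hasDerivAt hf0
  have heq : deriv (wf ω₁ ω₂ n m) / wf ω₁ ω₂ n m =ᶠ[nhds z]
      fun w ↦ (m : ℂ) * n * wZeta ω₁ ω₂ ((n : ℂ) * w / m) - (n : ℂ) ^ 2 * wZeta ω₁ ω₂ w := by
    filter_upwards [hev, hev'] with w hw hw'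
    exact logDeriv_wf hΩ hm.ne' hw hw'
  have hfin := hleft.unique (hright.congr_of_eventuallyEq heq)
  rw [mul_comm ((n : ℂ) ^ 2), ← div_div, sq (deriv _ z), hfin]
  field_simp
  ring
end
end
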